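/- arXiv:2112.14803 — 3 statements merged into one kernel-verified Lean document; each statement's English description precedes it below -/
import Mathlib

section
/- Let q ≥ 5 be a prime power. If q is odd and ρ ∈ F_q is a non-square, then the line through (1:0:ρ:0) and (0:1:0:ρ) is an imaginary chord of the twisted cubic C, and its stabilizer in G_q has order 2(q+1). If q is even and η ∈ F_q has absolute trace 1, then the line through (η+1:1:1:0) and (η:η:0:1) is an imaginary chord of C, and its stabilizer in G_q has order 2(q+1). -/
open Matrix Submodule

noncomputable section

/-- Row-vector action of an invertible matrix on subspaces of `F^4`:
a projectivity of `PG(3,q)` induced by the matrix. -/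
def projAct (F : Type) [Field F] (A : GL (Fin 4) F) :
    Submodule F (Fin 4 → F) → Submodule F (Fin 4 → F) :=
  fun W => W.map (Matrix.vecMulLinear (A : Matrix (Fin 4) (Fin 4) F))

/-- Representative vectors of the points of the twisted cubic. -/
def cubicVecs (F : Type) [Field F] : Set (Fin 4 → F) :=
  {v | (∃ t : F, v = ![t ^ 3, t ^ 2, t, 1]) ∨ v = ![1, 0, 0, 0]}

/-- The twisted cubic, as a set of projective points (1-dimensional subspaces). -/
def twistedCubic (F : Type) [Field F] : Set (Submodule F (Fin 4 → F)) :=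
  (fun v => Submodule.span F {v}) '' cubicVecs F

/-- The group `G_q` of projectivities fixing the twisted cubic, modeled as those maps
on subspaces that are induced by an invertible matrix and map the cubic onto itself. -/
def Gq (F : Type) [Field F] :
    Set ((Submodule F (Fin 4 → F)) → (Submodule F (Fin 4 → F))) :=
  {f | (∃ A : GL (Fin 4) F, f = projAct F A) ∧ f '' twistedCubic F = twistedCubic F}

def isPoint (F : Type) [Field F] (W : Submodule F (Fin 4 → F)) : Prop :=
  Module.finrank F W = 1

def isLine (F : Type) [Field F] (W : Submodule F (Fin 4 → F)) : Prop :=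
  Module.finrank F W = 2

/-- The orbit of a line under `G_q`. -/
def lineOrbit (F : Type) [Field F] (ℓ : Submodule F (Fin 4 → F)) :
    Set (Submodule F (Fin 4 → F)) :=
  {m | ∃ f ∈ Gq F, f ℓ = m}

/-- The stabilizer of a line in `G_q`. -/
def lineStab (F : Type) [Field F] (ℓ : Submodule F (Fin 4 → F)) :
    Set ((Submodule F (Fin 4 → F)) → (Submodule F (Fin 4 → F))) :=
  {f ∈ Gq F | f ℓ = ℓ}

/-- The linear form `y ↦ c0 y0 + c1 y1 + c2 y2 + c3 y3` defining a plane. -/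
def planeForm (F : Type) [Field F] (c : Fin 4 → F) : (Fin 4 → F) →ₗ[F] F where
  toFun y := c 0 * y 0 + c 1 * y 1 + c 2 * y 2 + c 3 * y 3
  map_add' a b := by simp only [Pi.add_apply]; ring
  map_smul' r a := by simp only [Pi.smul_apply, smul_eq_mul, RingHom.id_apply]; ring

/-- The plane `π(c0,c1,c2,c3)`. -/
def planeOf (F : Type) [Field F] (c : Fin 4 → F) : Submodule F (Fin 4 → F) :=
  LinearMap.ker (planeForm F c)

/-- The null polarity `𝔄`: the polar subspace of `W` w.r.t. the bilinear form
sending a point `(x0:x1:x2:x3)` to the plane `π(x3, −3x2, 3x1, −x0)`. -/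
def nullPolarity (F : Type) [Field F] (W : Submodule F (Fin 4 → F)) :
    Submodule F (Fin 4 → F) :=
  ⨅ x ∈ (W : Set (Fin 4 → F)), planeOf F ![x 3, -(3 * x 2), 3 * x 1, -(x 0)]

/-- The tangent line to the twisted cubic at `P(t)`, `t ∈ F`. -/
def tangentAt (F : Type) [Field F] (t : F) : Submodule F (Fin 4 → F) :=
  Submodule.span F {![t ^ 3, t ^ 2, t, 1], ![3 * t ^ 2, 2 * t, 1, 0]}

/-- The tangent line to the twisted cubic at `P(∞)`. -/
def tangentAtInf (F : Type) [Field F] : Submodule F (Fin 4 → F) :=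
  Submodule.span F {![1, 0, 0, 0], ![0, 1, 0, 0]}

def isTangent (F : Type) [Field F] (ℓ : Submodule F (Fin 4 → F)) : Prop :=
  (∃ t : F, ℓ = tangentAt F t) ∨ ℓ = tangentAtInf F

/-- The osculating plane at `P(t)`, `t ∈ F`. -/
def oscPlane (F : Type) [Field F] (t : F) : Submodule F (Fin 4 → F) :=
  planeOf F ![1, -(3 * t), 3 * t ^ 2, -(t ^ 3)]

/-- The osculating plane at `P(∞)`. -/
def oscPlaneInf (F : Type) [Field F] : Submodule F (Fin 4 → F) :=
  planeOf F ![0, 0, 0, 1]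

def isOscPlane (F : Type) [Field F] (π : Submodule F (Fin 4 → F)) : Prop :=
  (∃ t : F, π = oscPlane F t) ∨ π = oscPlaneInf F

/-- A real chord: the line joining two distinct points of the twisted cubic. -/
def isRealChord (F : Type) [Field F] (ℓ : Submodule F (Fin 4 → F)) : Prop :=
  ∃ u ∈ cubicVecs F, ∃ v ∈ cubicVecs F,
    Submodule.span F {u} ≠ Submodule.span F {v} ∧ ℓ = Submodule.span F {u, v}

/-- A real axis: the intersection of two distinct osculating planes. -/
def isRealAxis (F : Type) [Field F] (ℓ : Submodule F (Fin 4 → F)) : Prop :=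
  ∃ π₁ π₂ : Submodule F (Fin 4 → F),
    isOscPlane F π₁ ∧ isOscPlane F π₂ ∧ π₁ ≠ π₂ ∧ ℓ = π₁ ⊓ π₂

/-- The `F_{q²}`-extension of a subspace of `F^4`. -/
def extendSub (F K : Type) [Field F] [Field K] [Algebra F K]
    (W : Submodule F (Fin 4 → F)) : Submodule K (Fin 4 → K) :=
  Submodule.span K ((fun v i => algebraMap F K (v i)) '' (W : Set (Fin 4 → F)))

/-- An external line: a line containing no point of the twisted cubic. -/
def isExternal (F : Type) [Field F] (ℓ : Submodule F (Fin 4 → F)) : Prop :=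
  isLine F ℓ ∧ ∀ P ∈ twistedCubic F, ¬ P ≤ ℓ

/-- An imaginary chord: a line disjoint from the cubic whose `F_{q²}`-extension joins a
pair of Frobenius-conjugate points `P(t)`, `P(t^q)` of the cubic over `F_{q²}`. -/
def isImagChord (F K : Type) [Field F] [Field K] [Algebra F K] (q : ℕ)
    (ℓ : Submodule F (Fin 4 → F)) : Prop :=
  isExternal F ℓ ∧
  ∃ t : K, t ∉ Set.range (algebraMap F K) ∧
    extendSub F K ℓ =
      Submodule.span K
        ({![t ^ 3, t ^ 2, t, 1], ![(t ^ q) ^ 3, (t ^ q) ^ 2, t ^ q, 1]} :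
          Set (Fin 4 → K))

/-- An imaginary axis: a line whose `F_{q²}`-extension is the intersection of a pair of
Frobenius-conjugate osculating planes `π_osc(t)`, `π_osc(t^q)` over `F_{q²}`. -/
def isImagAxis (F K : Type) [Field F] [Field K] [Algebra F K] (q : ℕ)
    (ℓ : Submodule F (Fin 4 → F)) : Prop :=
  isLine F ℓ ∧
  ∃ t : K, t ∉ Set.range (algebraMap F K) ∧
    extendSub F K ℓ =
      planeOf K ![1, -(3 * t), 3 * t ^ 2, -(t ^ 3)] ⊓
        planeOf K ![1, -(3 * t ^ q), 3 * (t ^ q) ^ 2, -((t ^ q) ^ 3)]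

/-- A unisecant: a line meeting the twisted cubic in exactly one point. -/
def isUnisecant (F : Type) [Field F] (ℓ : Submodule F (Fin 4 → F)) : Prop :=
  isLine F ℓ ∧ ∃! P, P ∈ twistedCubic F ∧ P ≤ ℓ

/-- A `UΓ`-line: a non-tangent unisecant lying in some osculating plane. -/
def isUGamma (F : Type) [Field F] (ℓ : Submodule F (Fin 4 → F)) : Prop :=
  isUnisecant F ℓ ∧ ¬ isTangent F ℓ ∧ ∃ π, isOscPlane F π ∧ ℓ ≤ π

/-- A `UnΓ`-line: a non-tangent unisecant lying in no osculating plane. -/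
def isUnGamma (F : Type) [Field F] (ℓ : Submodule F (Fin 4 → F)) : Prop :=
  isUnisecant F ℓ ∧ ¬ isTangent F ℓ ∧ ∀ π, isOscPlane F π → ¬ ℓ ≤ π

/-- An `EΓ`-line: an external line, other than an imaginary chord, lying in some
osculating plane. -/
def isEGamma (F K : Type) [Field F] [Field K] [Algebra F K] (q : ℕ)
    (ℓ : Submodule F (Fin 4 → F)) : Prop :=
  isExternal F ℓ ∧ ¬ isImagChord F K q ℓ ∧ ∃ π, isOscPlane F π ∧ ℓ ≤ π

/-- For `q ≡ 0 (mod 3)`: the axis of `Γ`, the line `x0 = x3 = 0`. -/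
def axisLine (F : Type) [Field F] : Submodule F (Fin 4 → F) :=
  Submodule.span F {![0, 1, 0, 0], ![0, 0, 1, 0]}

/-- For `q ≡ 0 (mod 3)`: an `EA`-line, i.e. an external line, other than an imaginary
chord and other than the axis of `Γ`, meeting the axis of `Γ`. -/
def isEA (F K : Type) [Field F] [Field K] [Algebra F K] (q : ℕ)
    (ℓ : Submodule F (Fin 4 → F)) : Prop :=
  isExternal F ℓ ∧ ¬ isImagChord F K q ℓ ∧ ℓ ≠ axisLine F ∧ ℓ ⊓ axisLine F ≠ ⊥

end

theorem exists_quad_root (q : ℕ) (F : Type) [Field F] [Fintype F]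
    (hcard : Fintype.card F = q) (K : Type) [Field K] [Fintype K] [Algebra F K]
    (hcardK : Fintype.card K = q ^ 2) (a b : F) (hr : ∀ x : F, x ^ 2 ≠ a * x + b) :
    ∃ t : K, t ^ 2 = algebraMap F K a * t + algebraMap F K b := by
  classical
  have hq1 : 1 < q := hcard ▸ Fintype.one_lt_card
  have hfin : Module.finrank F K = 2 := by
    have h := Module.card_eq_pow_finrank (K := F) (V := K)
    rw [hcard, hcardK] at h
    exact (Nat.pow_right_injective hq1 h).symm
  let f : Polynomial F := Polynomial.X ^ 2 - (Polynomial.C a * Polynomial.X + Polynomial.C b)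
  have hdeg : f.natDegree = 2 := by
    simp only [f]
    compute_degree!
  have hirr : Irreducible f := by
    apply Polynomial.irreducible_of_degree_le_three_of_not_isRoot
    · rw [hdeg]; decide
    · intro x hx
      apply hr x
      have : x ^ 2 - (a * x + b) = 0 := by simpa [f, Polynomial.IsRoot] using hx
      exact sub_eq_zero.mp this
  have : Fact (Irreducible f) := ⟨hirr⟩
  have hf0 : f ≠ 0 := hirr.ne_zero
  have hfr : Module.finrank F (AdjoinRoot f) = 2 := by
    rw [(AdjoinRoot.powerBasis hf0).finrank, AdjoinRoot.powerBasis_dim, hdeg]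
  have : FiniteDimensional F (AdjoinRoot f) := (AdjoinRoot.powerBasis hf0).finite
  have : Finite (AdjoinRoot f) := Module.finite_of_finite F
  obtain ⟨φ⟩ := FiniteField.nonempty_algHom_of_finrank_dvd (F := F) (K := AdjoinRoot f) (L := K)
    (by rw [hfr, hfin])
  refine ⟨φ (AdjoinRoot.root f), ?_⟩
  have h0 : Polynomial.aeval (AdjoinRoot.root f) f = 0 := by
    rw [AdjoinRoot.aeval_eq, AdjoinRoot.mk_self]
  have h1 := congrArg φ h0
  simp only [f, map_sub, map_add, map_mul, map_pow, Polynomial.aeval_X, Polynomial.aeval_C,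
    map_zero, AlgHom.commutes] at h1
  exact sub_eq_zero.mp h1

theorem mem_range_of_pow_eq (q : ℕ) (F : Type) [Field F] [Fintype F]
    (hcard : Fintype.card F = q) (K : Type) [Field K] [Algebra F K] (t : K) (ht : t ^ q = t) :
    t ∈ Set.range (algebraMap F K) := by
  classical
  by_contra hn
  have hq1 : 1 < q := hcard ▸ Fintype.one_lt_card
  have hne : (Polynomial.X ^ q - Polynomial.X : Polynomial K) ≠ 0 :=
    FiniteField.X_pow_card_sub_X_ne_zero K hq1
  have hle := Polynomial.card_le_degree_of_subset_roots
    (p := (Polynomial.X ^ q - Polynomial.X : Polynomial K))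
    (Z := insert t (Finset.univ.image (algebraMap F K))) (by
      intro x hx
      rw [Multiset.mem_toFinset.symm.symm.symm] at hx
      have hx' : x = t ∨ ∃ y, algebraMap F K y = x := by simpa using hx
      rw [Polynomial.mem_roots hne]
      rcases hx' with rfl | ⟨y, rfl⟩
      · simp [Polynomial.IsRoot, ht]
      · simp [Polynomial.IsRoot, ← map_pow, ← hcard, FiniteField.pow_card])
  rw [FiniteField.X_pow_card_sub_X_natDegree_eq K hq1, Finset.card_insert_of_notMem (by simpa using hn),
    Finset.card_image_of_injective _ (algebraMap F K).injective, Finset.card_univ, hcard] at hle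
  omega

theorem conj_root (q : ℕ) (F : Type) [Field F] [Fintype F]
    (hcard : Fintype.card F = q) (K : Type) [Field K] [Algebra F K]
    (a b : F) (t : K) (ht : t ^ 2 = algebraMap F K a * t + algebraMap F K b)
    (hn : t ∉ Set.range (algebraMap F K)) : t ^ q = algebraMap F K a - t := by
  have h1 : t ^ q ≠ t := fun h => hn (mem_range_of_pow_eq q F hcard K t h)
  have h2 := congrArg (FiniteField.frobeniusAlgHom F K) ht
  simp only [map_add, map_mul, map_pow, AlgHom.commutes] at h2
  rw [FiniteField.coe_frobeniusAlgHom] at h2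
  simp only [hcard] at h2
  have h3 : (t ^ q - t) * (t ^ q - (algebraMap F K a - t)) = 0 := by
    linear_combination h2 - ht
  rcases mul_eq_zero.mp h3 with h | h
  · exact absurd (sub_eq_zero.mp h) h1
  · exact sub_eq_zero.mp h

def chordLine (F : Type) [Field F] (a b : F) : Submodule F (Fin 4 → F) :=
  Submodule.span F {![a ^ 2 + b, a, 1, 0], ![a * b, b, 0, 1]}

theorem mem_chordLine (F : Type) [Field F] (a b : F) (v : Fin 4 → F) :
    v ∈ chordLine F a b ↔ v 0 = a * v 1 + b * v 2 ∧ v 1 = a * v 2 + b * v 3 := by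
  unfold chordLine
  rw [Submodule.mem_span_pair]
  constructor
  · rintro ⟨c, d, rfl⟩
    simp
    constructor <;> ring
  · rintro ⟨h0, h1⟩
    refine ⟨v 2, v 3, ?_⟩
    ext i
    fin_cases i <;> simp [h0, h1] <;> ring

theorem chord_imag (q : ℕ) (F : Type) [Field F] [Fintype F]
    (hcard : Fintype.card F = q) (K : Type) [Field K] [Algebra F K]
    (a b : F) (hr : ∀ x : F, x ^ 2 ≠ a * x + b)
    (t : K) (ht : t ^ 2 = algebraMap F K a * t + algebraMap F K b)
    (hn : t ∉ Set.range (algebraMap F K)) : isImagChord F K q (chordLine F a b) := by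
  have hc := conj_root q F hcard K a b t ht hn
  have h1 : t ^ q ≠ t := fun h => hn (mem_range_of_pow_eq q F hcard K t h)
  refine ⟨⟨?_, ?_⟩, t, hn, ?_⟩
  · unfold isLine chordLine
    have hli : LinearIndependent F ![![a ^ 2 + b, a, 1, 0], ![a * b, b, 0, (1 : F)]] := by
      rw [LinearIndependent.pair_iff]
      intro c d h
      have h2 := congrFun h 2
      have h3 := congrFun h 3
      simp at h2 h3
      exact ⟨h2, h3⟩
    have := finrank_span_eq_card hli
    rw [Matrix.range_cons, Matrix.range_cons, Matrix.range_empty, Set.union_empty,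
      Set.singleton_union] at this
    simpa using this
  · rintro P ⟨v, hv, rfl⟩ hle
    have hm : v ∈ chordLine F a b := hle (Submodule.mem_span_singleton_self v)
    rw [mem_chordLine] at hm
    rcases hv with ⟨x, rfl⟩ | rfl
    · have := hm.2
      simp at this
      exact hr x this
    · have := hm.1
      simp at this
  · rw [hc]
    set A := algebraMap F K a with hA
    set B := algebraMap F K b with hB
    have hd : t - (A - t) ≠ 0 := by
      rw [← hc]; exact fun h => h1 (sub_eq_zero.mp h).symm
    apply le_antisymm
    · unfold extendSub
      rw [Submodule.span_le]
      rintro _ ⟨v, hv, rfl⟩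
      have hm := (mem_chordLine F a b v).mp hv
      rw [SetLike.mem_coe, Submodule.mem_span_pair]
      have e1 : algebraMap F K (v 1) = A * algebraMap F K (v 2) + B * algebraMap F K (v 3) := by
        rw [hm.2]; simp [hA, hB]
      have e0 : algebraMap F K (v 0) = A * algebraMap F K (v 1) + B * algebraMap F K (v 2) := by
        rw [hm.1]; simp [hA, hB]
      have hB' : B = t ^ 2 - A * t := by rw [ht]; ring
      refine ⟨(algebraMap F K (v 2) - (A - t) * algebraMap F K (v 3)) / (t - (A - t)),
        (t * algebraMap F K (v 3) - algebraMap F K (v 2)) / (t - (A - t)), ?_⟩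
      ext i
      fin_cases i
      · simp [e0, e1, hB']; field_simp; ring
      · simp [e1, hB']; field_simp; ring
      · simp; field_simp; ring
      · simp; field_simp; ring
    · have key : ∀ s : K, s ^ 2 = A * s + B → ![s ^ 3, s ^ 2, s, 1] ∈ extendSub F K (chordLine F a b) := by
        intro s hs
        have e1 : (fun i => algebraMap F K ((![a ^ 2 + b, a, 1, 0] : Fin 4 → F) i)) ∈
            extendSub F K (chordLine F a b) :=
          Submodule.subset_span ⟨_, Submodule.subset_span (by simp), rfl⟩
        have e2 : (fun i => algebraMap F K ((![a * b, b, 0, 1] : Fin 4 → F) i)) ∈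
            extendSub F K (chordLine F a b) :=
          Submodule.subset_span ⟨_, Submodule.subset_span (by simp), rfl⟩
        have := Submodule.add_mem _ (Submodule.smul_mem _ s e1) e2
        convert this using 1
        ext i
        fin_cases i
        · simp [← hA, ← hB]; linear_combination (s + A) * hs
        · simp [← hA, ← hB]; linear_combination hs
        · simp
        · simp
      rw [Submodule.span_le]
      rintro _ (rfl | rfl)
      · exact key t ht
      · exact key (A - t) (by linear_combination ht)

def nu (F : Type) [Field F] (x y : F) : Fin 4 → F := ![x ^ 3, x ^ 2 * y, x * y ^ 2, y ^ 3]

def symMat (F : Type) [Field F] (m n r s : F) : Matrix (Fin 4) (Fin 4) F :=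
  !![m ^ 3, m ^ 2 * n, m * n ^ 2, n ^ 3;
     3 * m ^ 2 * r, m ^ 2 * s + 2 * m * n * r, 2 * m * n * s + n ^ 2 * r, 3 * n ^ 2 * s;
     3 * m * r ^ 2, 2 * m * r * s + n * r ^ 2, m * s ^ 2 + 2 * n * r * s, 3 * n * s ^ 2;
     r ^ 3, r ^ 2 * s, r * s ^ 2, s ^ 3]

theorem symMat_mul (F : Type) [Field F] (m n r s m' n' r' s' : F) :
    symMat F (m * m' + n * r') (m * n' + n * s') (r * m' + s * r') (r * n' + s * s') =
      symMat F m n r s * symMat F m' n' r' s' := by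
  ext i j
  fin_cases i <;> fin_cases j <;> simp [symMat, Matrix.mul_apply, Fin.sum_univ_four] <;> ring

def symHom (F : Type) [Field F] : Matrix (Fin 2) (Fin 2) F →* Matrix (Fin 4) (Fin 4) F where
  toFun M := symMat F (M 0 0) (M 0 1) (M 1 0) (M 1 1)
  map_one' := by
    ext i j
    fin_cases i <;> fin_cases j <;> simp [symMat]
  map_mul' M N := by
    rw [← symMat_mul]
    simp [Matrix.mul_apply, Fin.sum_univ_two]

def symGL (F : Type) [Field F] : GL (Fin 2) F →* GL (Fin 4) F := Units.map (symHom F)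

theorem symGL_val (F : Type) [Field F] (M : GL (Fin 2) F) :
    (symGL F M : Matrix (Fin 4) (Fin 4) F) =
      symMat F (M.val 0 0) (M.val 0 1) (M.val 1 0) (M.val 1 1) := rfl

theorem nu_symMat (F : Type) [Field F] (m n r s x y : F) :
    Matrix.vecMul (nu F x y) (symMat F m n r s) = nu F (m * x + r * y) (n * x + s * y) := by
  ext j
  fin_cases j <;> simp [symMat, nu, Matrix.vecMul, dotProduct, Fin.sum_univ_four] <;> ring

theorem projAct_mul (F : Type) [Field F] (A B : GL (Fin 4) F) (W : Submodule F (Fin 4 → F)) :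
    projAct F (A * B) W = projAct F B (projAct F A W) := by
  unfold projAct
  rw [← Submodule.map_comp]
  congr 1
  refine LinearMap.ext fun v => ?_
  simp [Matrix.vecMul_vecMul]

theorem projAct_one (F : Type) [Field F] (W : Submodule F (Fin 4 → F)) :
    projAct F 1 W = W := by
  unfold projAct
  ext v
  simp

theorem projAct_span (F : Type) [Field F] (A : GL (Fin 4) F) (v : Fin 4 → F) :
    projAct F A (Submodule.span F {v}) =
      Submodule.span F {Matrix.vecMul v (A : Matrix (Fin 4) (Fin 4) F)} := by
  unfold projAct
  rw [Submodule.map_span, Set.image_singleton]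
  rfl

theorem projAct_smul (F : Type) [Field F] (A B : GL (Fin 4) F) (c : F) (hc : c ≠ 0)
    (h : (A : Matrix (Fin 4) (Fin 4) F) = c • (B : Matrix (Fin 4) (Fin 4) F)) :
    projAct F A = projAct F B := by
  funext W
  unfold projAct
  have : Matrix.vecMulLinear (A : Matrix (Fin 4) (Fin 4) F) =
      c • Matrix.vecMulLinear (B : Matrix (Fin 4) (Fin 4) F) := by
    refine LinearMap.ext fun v => ?_
    simp [h, Matrix.vecMul_smul]
  rw [this, Submodule.map_smul _ _ _ hc]

theorem mem_twistedCubic (F : Type) [Field F] (P : Submodule F (Fin 4 → F)) :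
    P ∈ twistedCubic F ↔ ∃ x y : F, (x ≠ 0 ∨ y ≠ 0) ∧ P = Submodule.span F {nu F x y} := by
  constructor
  · rintro ⟨v, ⟨t, rfl⟩ | rfl, rfl⟩
    · exact ⟨t, 1, Or.inr one_ne_zero, by simp [nu]⟩
    · exact ⟨1, 0, Or.inl one_ne_zero, by simp [nu]⟩
  · rintro ⟨x, y, hxy, rfl⟩
    by_cases hy : y = 0
    · subst hy
      have hx : x ≠ 0 := by simpa using hxy
      refine ⟨![1, 0, 0, 0], Or.inr rfl, ?_⟩
      have : nu F x 0 = (x ^ 3) • ![1, 0, 0, 0] := by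
        ext i; fin_cases i <;> simp [nu]
      simp only [this]
      exact (Submodule.span_singleton_smul_eq (IsUnit.mk0 _ (pow_ne_zero 3 hx)) _).symm
    · refine ⟨![(x / y) ^ 3, (x / y) ^ 2, x / y, 1], Or.inl ⟨_, rfl⟩, ?_⟩
      have : nu F x y = (y ^ 3) • ![(x / y) ^ 3, (x / y) ^ 2, x / y, 1] := by
        ext i; fin_cases i <;> simp [nu] <;> field_simp
      simp only [this]
      exact (Submodule.span_singleton_smul_eq (IsUnit.mk0 _ (pow_ne_zero 3 hy)) _).symm

theorem cross_of_span (F : Type) [Field F] (x y x' y' : F) (h : x' ≠ 0 ∨ y' ≠ 0)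
    (hs : Submodule.span F {nu F x' y'} ≤ Submodule.span F {nu F x y}) : x' * y = y' * x := by
  have hm := hs (Submodule.mem_span_singleton_self _)
  obtain ⟨c, hc⟩ := Submodule.mem_span_singleton.mp hm
  have h0 := congrFun hc 0
  have h1 := congrFun hc 1
  have h2 := congrFun hc 2
  have h3 := congrFun hc 3
  simp [nu] at h0 h1 h2 h3
  have e1 : x' ^ 2 * (x' * y - y' * x) = 0 := by linear_combination (-y) * h0 + x * h1
  have e2 : y' ^ 2 * (x' * y - y' * x) = 0 := by linear_combination (-y) * h2 + x * h3
  rcases h with h | h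
  · exact sub_eq_zero.mp ((mul_eq_zero.mp e1).resolve_left (pow_ne_zero 2 h))
  · exact sub_eq_zero.mp ((mul_eq_zero.mp e2).resolve_left (pow_ne_zero 2 h))

theorem det_ne (F : Type) [Field F] (M : GL (Fin 2) F) :
    M.val 0 0 * M.val 1 1 - M.val 0 1 * M.val 1 0 ≠ 0 := by
  rw [← Matrix.det_fin_two]
  exact ((Matrix.isUnit_iff_isUnit_det _).mp M.isUnit).ne_zero

theorem lin_ne (F : Type) [Field F] (m n r s x y : F) (hd : m * s - n * r ≠ 0)
    (h : x ≠ 0 ∨ y ≠ 0) : m * x + r * y ≠ 0 ∨ n * x + s * y ≠ 0 := by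
  by_contra hcon
  push Not at hcon
  obtain ⟨h1, h2⟩ := hcon
  have e1 : (m * s - n * r) * x = 0 := by linear_combination s * h1 - r * h2
  have e2 : (m * s - n * r) * y = 0 := by linear_combination m * h2 - n * h1
  rcases h with h | h
  · exact mul_ne_zero hd h e1
  · exact mul_ne_zero hd h e2

theorem symGL_maps (F : Type) [Field F] (M : GL (Fin 2) F) (P : Submodule F (Fin 4 → F))
    (hP : P ∈ twistedCubic F) : projAct F (symGL F M) P ∈ twistedCubic F := by
  rw [mem_twistedCubic] at hP ⊢
  obtain ⟨x, y, hxy, rfl⟩ := hP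
  refine ⟨_, _, lin_ne F _ _ _ _ x y (det_ne F M) hxy, ?_⟩
  rw [projAct_span, symGL_val, nu_symMat]

theorem symGL_mem_Gq (F : Type) [Field F] (M : GL (Fin 2) F) :
    projAct F (symGL F M) ∈ Gq F := by
  refine ⟨⟨_, rfl⟩, ?_⟩
  apply Set.Subset.antisymm
  · rintro _ ⟨P, hP, rfl⟩
    exact symGL_maps F M P hP
  · intro P hP
    refine ⟨_, symGL_maps F M⁻¹ P hP, ?_⟩
    rw [← projAct_mul, ← map_mul, inv_mul_cancel, map_one, projAct_one]

theorem cubic_zero (F : Type) [Field F] [Fintype F] (hq : 5 ≤ Fintype.card F) (c0 c1 c2 c3 : F)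
    (h : ∀ t : F, t ≠ 0 → c3 * t ^ 3 + c2 * t ^ 2 + c1 * t + c0 = 0) :
    c0 = 0 ∧ c1 = 0 ∧ c2 = 0 ∧ c3 = 0 := by
  classical
  let p : Polynomial F := Polynomial.C c3 * Polynomial.X ^ 3 + Polynomial.C c2 * Polynomial.X ^ 2 +
    Polynomial.C c1 * Polynomial.X + Polynomial.C c0
  have hp : p = 0 := by
    refine Polynomial.eq_zero_of_natDegree_lt_card_of_eval_eq_zero' p (Finset.univ.erase 0) ?_ ?_
    · intro t ht
      have := h t (by simpa using ht)
      simpa [p] using this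
    · rw [Finset.card_erase_of_mem (Finset.mem_univ _), Finset.card_univ]
      have : p.natDegree ≤ 3 := Polynomial.natDegree_cubic_le
      omega
  have e0 := congrArg (fun p => Polynomial.coeff p 0) hp
  have e1 := congrArg (fun p => Polynomial.coeff p 1) hp
  have e2 := congrArg (fun p => Polynomial.coeff p 2) hp
  have e3 := congrArg (fun p => Polynomial.coeff p 3) hp
  simp [p, Polynomial.coeff_X, Polynomial.coeff_C] at e0 e1 e2 e3
  exact ⟨e0, e1, e2, e3⟩

theorem diag_case (F : Type) [Field F] [Fintype F] (hq : 5 ≤ Fintype.card F) (B : GL (Fin 4) F)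
    (hB : ∀ P ∈ twistedCubic F, projAct F B P ∈ twistedCubic F)
    (h0 : projAct F B (Submodule.span F {nu F 1 0}) = Submodule.span F {nu F 1 0})
    (h3 : projAct F B (Submodule.span F {nu F 0 1}) = Submodule.span F {nu F 0 1}) :
    ∃ M : GL (Fin 2) F, projAct F B = projAct F (symGL F M) := by
  have hdet : B.val.det ≠ 0 := ((Matrix.isUnit_iff_isUnit_det _).mp B.isUnit).ne_zero
  have r0 : Matrix.vecMul (nu F 1 0) B.val ∈ Submodule.span F {nu F 1 0} := by
    rw [← h0, projAct_span]; exact Submodule.mem_span_singleton_self _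
  have r3 : Matrix.vecMul (nu F 0 1) B.val ∈ Submodule.span F {nu F 0 1} := by
    rw [← h3, projAct_span]; exact Submodule.mem_span_singleton_self _
  obtain ⟨α, hα⟩ := Submodule.mem_span_singleton.mp r0
  obtain ⟨δ, hδ⟩ := Submodule.mem_span_singleton.mp r3
  have q00 := congrFun hα 0
  have q01 := congrFun hα 1
  have q02 := congrFun hα 2
  have q03 := congrFun hα 3
  have q30 := congrFun hδ 0
  have q31 := congrFun hδ 1
  have q32 := congrFun hδ 2
  have q33 := congrFun hδ 3
  simp [nu, Matrix.vecMul, dotProduct, Fin.sum_univ_four] at q00 q01 q02 q03 q30 q31 q32 q33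
  have hpt : ∀ t : F,
      (Matrix.vecMul (nu F t 1) B.val 1) ^ 2 =
        (Matrix.vecMul (nu F t 1) B.val 0) * (Matrix.vecMul (nu F t 1) B.val 2) ∧
      (Matrix.vecMul (nu F t 1) B.val 2) ^ 2 =
        (Matrix.vecMul (nu F t 1) B.val 1) * (Matrix.vecMul (nu F t 1) B.val 3) := by
    intro t
    have hm := hB _ ((mem_twistedCubic F _).mpr ⟨t, 1, Or.inr one_ne_zero, rfl⟩)
    obtain ⟨x, y, -, hxy⟩ := (mem_twistedCubic F _).mp hm
    rw [projAct_span] at hxy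
    have hv : Matrix.vecMul (nu F t 1) B.val ∈ Submodule.span F {nu F x y} := by
      rw [← hxy]; exact Submodule.mem_span_singleton_self _
    obtain ⟨c, hc⟩ := Submodule.mem_span_singleton.mp hv
    rw [← hc]
    simp [nu]
    constructor <;> ring
  simp only [Matrix.vecMul, dotProduct, Fin.sum_univ_four, nu, Matrix.cons_val, ← q00, ← q01, ← q02,
    ← q03, ← q30, ← q31, ← q32, ← q33] at hpt
  obtain ⟨b0, hb0⟩ : ∃ x, x = B.val 1 0 := ⟨_, rfl⟩
  obtain ⟨b1, hb1⟩ : ∃ x, x = B.val 1 1 := ⟨_, rfl⟩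
  obtain ⟨b2, hb2⟩ : ∃ x, x = B.val 1 2 := ⟨_, rfl⟩
  obtain ⟨b3, hb3⟩ : ∃ x, x = B.val 1 3 := ⟨_, rfl⟩
  obtain ⟨c0, hc0⟩ : ∃ x, x = B.val 2 0 := ⟨_, rfl⟩
  obtain ⟨c1, hc1⟩ : ∃ x, x = B.val 2 1 := ⟨_, rfl⟩
  obtain ⟨c2, hc2⟩ : ∃ x, x = B.val 2 2 := ⟨_, rfl⟩
  obtain ⟨c3, hc3⟩ : ∃ x, x = B.val 2 3 := ⟨_, rfl⟩
  have hBm : B.val = !![α, 0, 0, 0; b0, b1, b2, b3; c0, c1, c2, c3; 0, 0, 0, δ] := by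
    ext i j
    fin_cases i <;> fin_cases j <;> 
      simp [← q00, ← q01, ← q02, ← q03, ← q30, ← q31, ← q32, ← q33, ← hb0, ← hb1, ← hb2, ← hb3,
        ← hc0, ← hc1, ← hc2, ← hc3]
  rw [hBm] at hdet
  have hdet' : α * δ * (b1 * c2 - b2 * c1) ≠ 0 := by
    intro h
    apply hdet
    refine Eq.trans ?_ h
    simp [Matrix.det_succ_row_zero, Fin.sum_univ_succ, Fin.succAbove]
    ring
  have hα0 : α ≠ 0 := fun h => hdet' (by rw [h]; ring)
  have hδ0 : δ ≠ 0 := fun h => hdet' (by rw [h]; ring)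
  simp only [← hb0, ← hb1, ← hb2, ← hb3, ← hc0, ← hc1, ← hc2, ← hc3] at hpt
  obtain ⟨u0, u1, u2, u3⟩ := cubic_zero F hq (c1 ^ 2 - c0 * c2) (2 * b1 * c1 - b0 * c2 - c0 * b2)
    (b1 ^ 2 - α * c2 - b0 * b2) (-(α * b2)) (by
      intro t ht
      have := (hpt t).1
      apply mul_left_cancel₀ (pow_ne_zero 2 ht)
      linear_combination this)
  obtain ⟨w0, w1, w2, w3⟩ := cubic_zero F hq (-(c1 * δ)) (c2 ^ 2 - b1 * δ - c1 * c3)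
    (2 * b2 * c2 - b1 * c3 - c1 * b3) (b2 ^ 2 - b1 * b3) (by
      intro t ht
      have := (hpt t).2
      apply mul_left_cancel₀ ht
      linear_combination this)
  have b20 : b2 = 0 := by simpa [hα0] using u3
  have c10 : c1 = 0 := by simpa [hδ0] using w0
  subst b20 c10
  have hb1n : b1 ≠ 0 := fun h => hdet' (by rw [h]; ring)
  have hc2n : c2 ≠ 0 := fun h => hdet' (by rw [h]; ring)
  have b30 : b3 = 0 := by simpa [hb1n] using w3
  have c30 : c3 = 0 := by simpa [hb1n] using w2
  have b00 : b0 = 0 := by simpa [hc2n] using u1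
  have c00 : c0 = 0 := by simpa [hc2n] using u0
  subst b30 c30 b00 c00
  have f1 : b1 ^ 2 = α * c2 := by linear_combination u2
  have f2 : c2 ^ 2 = b1 * δ := by linear_combination w1
  refine ⟨Matrix.GeneralLinearGroup.mkOfDetNeZero !![c2, 0; 0, δ] (by simp [hc2n, hδ0]), ?_⟩
  refine projAct_smul F _ _ (1 / δ ^ 2) (by simp [hδ0]) ?_
  rw [symGL_val, hBm]
  have g1 : b1 = c2 ^ 2 / δ := by field_simp; exact f2.symm
  have g2 : α = c2 ^ 3 / δ ^ 2 := by
    have : α = b1 ^ 2 / c2 := by field_simp; exact f1.symm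
    rw [this, g1]; field_simp
  ext i j
  fin_cases i <;> fin_cases j <;>
    simp [Matrix.GeneralLinearGroup.mkOfDetNeZero, symMat, g1, g2] <;> field_simp

theorem Gq_eq (F : Type) [Field F] [Fintype F] (hq : 5 ≤ Fintype.card F)
    (f : Submodule F (Fin 4 → F) → Submodule F (Fin 4 → F)) (hf : f ∈ Gq F) :
    ∃ M : GL (Fin 2) F, f = projAct F (symGL F M) := by
  obtain ⟨⟨A, rfl⟩, hA⟩ := hf
  have hA' : ∀ P ∈ twistedCubic F, projAct F A P ∈ twistedCubic F := fun P hP => by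
    rw [← hA]; exact ⟨P, hP, rfl⟩
  obtain ⟨x, y, hxy, e0⟩ := (mem_twistedCubic F _).mp
    (hA' _ ((mem_twistedCubic F _).mpr ⟨1, 0, Or.inl one_ne_zero, rfl⟩))
  obtain ⟨x', y', hxy', e1⟩ := (mem_twistedCubic F _).mp
    (hA' _ ((mem_twistedCubic F _).mpr ⟨0, 1, Or.inr one_ne_zero, rfl⟩))
  have hinv : ∀ W, projAct F A⁻¹ (projAct F A W) = W := fun W => by
    rw [← projAct_mul, mul_inv_cancel, projAct_one]
  have hd : x * y' - y * x' ≠ 0 := by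
    intro hd
    have hcr : x * y' = y * x' := sub_eq_zero.mp hd
    have key : ∃ c : F, nu F x y = c • nu F x' y' := by
      rcases hxy' with h | h
      · refine ⟨(x / x') ^ 3, ?_⟩
        have hy : y = x * y' / x' := by field_simp; exact hcr.symm
        subst hy
        ext i; fin_cases i <;> simp [nu] <;> field_simp
      · refine ⟨(y / y') ^ 3, ?_⟩
        have hx : x = y * x' / y' := by field_simp; exact hcr
        subst hx
        ext i; fin_cases i <;> simp [nu] <;> field_simp
    obtain ⟨c, hc⟩ := key
    have hle : Submodule.span F {nu F x y} ≤ Submodule.span F {nu F x' y'} := by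
      rw [hc]; exact Submodule.span_singleton_smul_le F c _
    have hle2 := Submodule.map_mono (f := Matrix.vecMulLinear ((A⁻¹ : GL (Fin 4) F) : Matrix (Fin 4) (Fin 4) F)) hle
    change projAct F A⁻¹ _ ≤ projAct F A⁻¹ _ at hle2
    rw [← e0, ← e1, hinv, hinv] at hle2
    have := cross_of_span F _ _ _ _ (Or.inl one_ne_zero) hle2
    simp at this
  let N : GL (Fin 2) F := Matrix.GeneralLinearGroup.mkOfDetNeZero !![x, y; x', y']
    (by rw [Matrix.det_fin_two_of]; exact hd)
  have hN0 : projAct F (symGL F N) (Submodule.span F {nu F 1 0}) = Submodule.span F {nu F x y} := by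
    rw [projAct_span, symGL_val, nu_symMat]
    simp [N, Matrix.GeneralLinearGroup.mkOfDetNeZero]
  have hN1 : projAct F (symGL F N) (Submodule.span F {nu F 0 1}) = Submodule.span F {nu F x' y'} := by
    rw [projAct_span, symGL_val, nu_symMat]
    simp [N, Matrix.GeneralLinearGroup.mkOfDetNeZero]
  have hNi : ∀ W, projAct F (symGL F N⁻¹) (projAct F (symGL F N) W) = W := fun W => by
    rw [← projAct_mul, ← map_mul, mul_inv_cancel, map_one, projAct_one]
  obtain ⟨M, hM⟩ := diag_case F hq (A * symGL F N⁻¹)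
    (fun P hP => by rw [projAct_mul]; exact symGL_maps F _ _ (hA' P hP))
    (by rw [projAct_mul, e0, ← hN0, hNi]) (by rw [projAct_mul, e1, ← hN1, hNi])
  refine ⟨M * N, ?_⟩
  funext W
  rw [map_mul, projAct_mul, ← hM, ← projAct_mul, mul_assoc, ← map_mul, inv_mul_cancel, map_one, mul_one]

theorem prop_of_projAct_eq (F : Type) [Field F] (M N : GL (Fin 2) F)
    (h : projAct F (symGL F M) = projAct F (symGL F N)) (x y : F) (hxy : x ≠ 0 ∨ y ≠ 0) :
    (M.val 0 0 * x + M.val 1 0 * y) * (N.val 0 1 * x + N.val 1 1 * y) =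
      (M.val 0 1 * x + M.val 1 1 * y) * (N.val 0 0 * x + N.val 1 0 * y) := by
  have := congrFun h (Submodule.span F {nu F x y})
  rw [projAct_span, projAct_span, symGL_val, symGL_val, nu_symMat, nu_symMat] at this
  exact cross_of_span F _ _ _ _ (lin_ne F _ _ _ _ x y (det_ne F M) hxy) this.le

theorem scalar_of_projAct_eq (F : Type) [Field F] (M N : GL (Fin 2) F)
    (h : projAct F (symGL F M) = projAct F (symGL F N)) :
    ∃ c : F, c ≠ 0 ∧ M.val 0 0 = c * N.val 0 0 ∧ M.val 0 1 = c * N.val 0 1 ∧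
      M.val 1 0 = c * N.val 1 0 ∧ M.val 1 1 = c * N.val 1 1 := by
  have h1 := prop_of_projAct_eq F M N h 1 0 (Or.inl one_ne_zero)
  have h2 := prop_of_projAct_eq F M N h 0 1 (Or.inr one_ne_zero)
  have h3 := prop_of_projAct_eq F M N h 1 1 (Or.inr one_ne_zero)
  have hM := det_ne F M
  have hN := det_ne F N
  generalize M.val 0 0 = m at *
  generalize M.val 0 1 = n at *
  generalize M.val 1 0 = r at *
  generalize M.val 1 1 = s at *
  generalize N.val 0 0 = m' at *
  generalize N.val 0 1 = n' at *
  generalize N.val 1 0 = r' at *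
  generalize N.val 1 1 = s' at *
  simp only [mul_one, mul_zero, add_zero, zero_add] at h1 h2 h3
  set D := m' * s' - n' * r' with hD
  -- by Cramer, `c = (m * s' - n * r') / D`
  have h4 : m * s' + r * n' = n * r' + s * m' := by linear_combination h3 - h1 - h2
  have e1 : D * m = (m * s' - n * r') * m' := by rw [hD]; linear_combination (-r') * h1
  have e2 : D * n = (m * s' - n * r') * n' := by rw [hD]; linear_combination (-s') * h1
  have e3 : D * r = (m * s' - n * r') * r' := by
    rw [hD]; linear_combination (m') * h2 - r' * h4
  have e4 : D * s = (m * s' - n * r') * s' := by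
    rw [hD]; linear_combination (n') * h2 - s' * h4
  refine ⟨(m * s' - n * r') / D, ?_, ?_, ?_, ?_, ?_⟩
  · intro h0
    have h0' : m * s' - n * r' = 0 := by
      rcases div_eq_zero_iff.mp h0 with h | h
      · exact h
      · exact absurd h hN
    rw [h0', zero_mul] at e1 e2
    have hm : m = 0 := (mul_eq_zero.mp e1).resolve_left hN
    have hn : n = 0 := (mul_eq_zero.mp e2).resolve_left hN
    apply hM
    rw [hm, hn]; ring
  · field_simp; linear_combination e1
  · field_simp; linear_combination e2
  · field_simp; linear_combination e3
  · field_simp; linear_combination e4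

theorem projAct_sym_scalar (F : Type) [Field F] (M N : GL (Fin 2) F) (c : F) (hc : c ≠ 0)
    (h : M.val = c • N.val) : projAct F (symGL F M) = projAct F (symGL F N) := by
  refine projAct_smul F _ _ (c ^ 3) (pow_ne_zero 3 hc) ?_
  rw [symGL_val, symGL_val, h]
  ext i j
  fin_cases i <;> fin_cases j <;> simp [symMat] <;> ring

theorem quad_ne (F : Type) [Field F] (a b : F) (hr : ∀ x : F, x ^ 2 ≠ a * x + b) (r s : F)
    (h : r ≠ 0 ∨ s ≠ 0) : s ^ 2 + a * r * s - b * r ^ 2 ≠ 0 := by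
  intro h0
  by_cases hr0 : r = 0
  · subst hr0
    have : s ≠ 0 := by simpa using h
    apply pow_ne_zero 2 this
    linear_combination h0
  · apply hr (-s / r)
    field_simp
    linear_combination h0

def famMat (F : Type) [Field F] (a b : F) (e : Bool) (r s : F) : Matrix (Fin 2) (Fin 2) F :=
  if e then !![-s, r; a * s - r * b, s] else !![r * a + s, r; r * b, s]

theorem famMat_det (F : Type) [Field F] (a b : F) (hr : ∀ x : F, x ^ 2 ≠ a * x + b)
    (e : Bool) (r s : F) (h : r ≠ 0 ∨ s ≠ 0) : (famMat F a b e r s).det ≠ 0 := by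
  have := quad_ne F a b hr r s h
  cases e
  · simp only [famMat, Bool.false_eq_true, if_false, Matrix.det_fin_two_of]
    intro h0; apply this; linear_combination h0
  · simp only [famMat, if_true, Matrix.det_fin_two_of]
    intro h0; apply this; linear_combination -h0

def famPar (F : Type) [Field F] : Option F → F × F
  | none => (0, 1)
  | some u => (1, u)

theorem famPar_ne (F : Type) [Field F] (o : Option F) : (famPar F o).1 ≠ 0 ∨ (famPar F o).2 ≠ 0 := by
  cases o <;> simp [famPar]

def famGL (F : Type) [Field F] (a b : F) (hr : ∀ x : F, x ^ 2 ≠ a * x + b) (p : Bool × Option F) :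
    GL (Fin 2) F :=
  Matrix.GeneralLinearGroup.mkOfDetNeZero (famMat F a b p.1 (famPar F p.2).1 (famPar F p.2).2)
    (famMat_det F a b hr _ _ _ (famPar_ne F p.2))

theorem famGL_val (F : Type) [Field F] (a b : F) (hr : ∀ x : F, x ^ 2 ≠ a * x + b)
    (p : Bool × Option F) :
    (famGL F a b hr p).val = famMat F a b p.1 (famPar F p.2).1 (famPar F p.2).2 := rfl

theorem fam_preserve (F : Type) [Field F] (a b : F) (e : Bool) (r s : F) (v : Fin 4 → F)
    (hv : v ∈ chordLine F a b) :
    Matrix.vecMul v (symHom F (famMat F a b e r s)) ∈ chordLine F a b := by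
  rw [mem_chordLine] at hv ⊢
  obtain ⟨h0, h1⟩ := hv
  rw [h1] at h0
  cases e
  · simp [symHom, symMat, famMat, Matrix.vecMul, dotProduct, Fin.sum_univ_four, h0, h1]
    constructor <;> ring
  · simp [symHom, symMat, famMat, Matrix.vecMul, dotProduct, Fin.sum_univ_four, h0, h1]
    constructor <;> ring

theorem projAct_eq_of_le (F : Type) [Field F] (A : GL (Fin 4) F) (W : Submodule F (Fin 4 → F))
    (h : ∀ v ∈ W, Matrix.vecMul v A.val ∈ W) : projAct F A W = W := by
  apply Submodule.eq_of_le_of_finrank_eq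
  · rintro _ ⟨v, hv, rfl⟩
    exact h v hv
  · have hinj : Function.Injective (Matrix.vecMulLinear A.val) := by
      intro v w hvw
      have := congrArg (fun z => Matrix.vecMul z (A⁻¹).val) hvw
      simpa [Matrix.vecMul_vecMul] using this
    exact (Submodule.equivMapOfInjective _ hinj W).finrank_eq.symm

theorem stab_cases (F : Type) [Field F] (K : Type) [Field K] [Algebra F K]
    (a b : F) (t : K) (ht : t ^ 2 = algebraMap F K a * t + algebraMap F K b)
    (hn : t ∉ Set.range (algebraMap F K)) (M : GL (Fin 2) F)
    (hM : projAct F (symGL F M) (chordLine F a b) = chordLine F a b) :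
    ∃ e, M.val = famMat F a b e (M.val 0 1) (M.val 1 1) := by
  have hind : ∀ u v : F, algebraMap F K u * t + algebraMap F K v = 0 → u = 0 ∧ v = 0 := by
    intro u v h
    have hu : u = 0 := by
      by_contra hu
      apply hn
      refine ⟨-v / u, ?_⟩
      have hu' : algebraMap F K u ≠ 0 := by simpa using hu
      rw [map_div₀, map_neg]
      field_simp
      linear_combination -h
    subst hu
    simpa using h
  have hmem : ∀ v ∈ chordLine F a b, Matrix.vecMul v (symGL F M).val ∈ chordLine F a b := by
    intro v hv
    rw [← hM] 
    exact ⟨v, hv, rfl⟩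
  have k1 := hmem _ (Submodule.subset_span (Set.mem_insert _ _))
  have k2 := hmem _ (Submodule.subset_span (Set.mem_insert_of_mem _ rfl))
  have hd := det_ne F M
  have hMe : M.val = !![M.val 0 0, M.val 0 1; M.val 1 0, M.val 1 1] := Matrix.eta_fin_two _
  rw [mem_chordLine, symGL_val] at k1 k2
  generalize M.val 0 0 = m at *
  generalize M.val 0 1 = n at *
  generalize M.val 1 0 = r at *
  generalize M.val 1 1 = s at *
  simp [symMat, Matrix.vecMul, dotProduct, Fin.sum_univ_four] at k1 k2
  obtain ⟨k10, k11⟩ := k1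
  obtain ⟨k20, k21⟩ := k2
  apply_fun algebraMap F K at k10 k11 k20 k21
  simp only [map_add, map_mul, map_pow, map_ofNat] at k10 k11 k20 k21
  set i := algebraMap F K with hi
  have hB : i b = t ^ 2 - i a * t := by rw [ht]; ring
  set x := i m * t + i r with hx
  set y := i n * t + i s with hy
  have z0 : x * (x ^ 2 - i a * x * y - i b * y ^ 2) = 0 := by
    rw [hx, hy]
    rw [hB] at k10 k20 ⊢
    linear_combination t * k10 + k20
  have z1 : y * (x ^ 2 - i a * x * y - i b * y ^ 2) = 0 := by
    rw [hx, hy]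
    rw [hB] at k11 k21 ⊢
    linear_combination t * k11 + k21
  have hQ : x ^ 2 - i a * x * y - i b * y ^ 2 = 0 := by
    by_contra hQ
    have hx0 := (mul_eq_zero.mp z0).resolve_right hQ
    have hy0 := (mul_eq_zero.mp z1).resolve_right hQ
    obtain ⟨m0, -⟩ := hind m r hx0
    obtain ⟨n0, -⟩ := hind n s hy0
    apply hd
    rw [m0, n0]; ring
  have hfac : (x - t * y) * (x - (i a - t) * y) = 0 := by
    rw [hB] at hQ
    linear_combination hQ
  rcases mul_eq_zero.mp hfac with h | h
  · refine ⟨false, ?_⟩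
    obtain ⟨p1, p2⟩ := hind (m - n * a - s) (r - n * b) (by
      simp only [← hi, map_sub, map_mul]
      rw [hx, hy] at h
      linear_combination h + i n * ht)
    rw [hMe]
    simp only [famMat, Bool.false_eq_true, if_false]
    rw [show m = n * a + s by linear_combination p1, show r = n * b by linear_combination p2]
  · refine ⟨true, ?_⟩
    obtain ⟨p1, p2⟩ := hind (m + s) (r - a * s + n * b) (by
      simp only [← hi, map_sub, map_add, map_mul]
      rw [hx, hy] at h
      linear_combination h - i n * ht)
    rw [hMe]
    simp only [famMat, if_true]
    rw [show m = -s by linear_combination p1, show r = a * s - n * b by linear_combination p2]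

theorem fam_inj (F : Type) [Field F] (a b : F) (hr : ∀ x : F, x ^ 2 ≠ a * x + b)
    (hdisc : a ^ 2 + 4 * b ≠ 0) :
    Function.Injective (fun p => projAct F (symGL F (famGL F a b hr p))) := by
  have hmix : ∀ (r s c r' s' : F), c ≠ 0 → (r ≠ 0 ∨ s ≠ 0) → r = c * r' → s = c * s' →
      r * a + s = c * (-s') → r * b = c * (a * s' - r' * b) → False := by
    intro r s c r' s' hc hne h1 h2 h3 h4
    have e3 : r * a + 2 * s = 0 := by linear_combination h3 + h2
    have e4 : 2 * b * r = a * s := by linear_combination h4 + b * h1 - a * h2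
    have e5 : (a ^ 2 + 4 * b) * r = 0 := by linear_combination a * e3 + 2 * e4
    have hr0 := (mul_eq_zero.mp e5).resolve_left hdisc
    rw [hr0] at e3 e4
    have hs : s ≠ 0 := by simpa [hr0] using hne
    have h20 : (2 : F) = 0 := by
      have : 2 * s = 0 := by linear_combination e3
      exact (mul_eq_zero.mp this).resolve_right hs
    have ha0 : a = 0 := by
      have : a * s = 0 := by linear_combination -e4
      exact (mul_eq_zero.mp this).resolve_right hs
    apply hdisc
    rw [ha0]
    linear_combination 2 * b * h20
  have hpar : ∀ (o o' : Option F) (c : F), (famPar F o).1 = c * (famPar F o').1 →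
      (famPar F o).2 = c * (famPar F o').2 → c ≠ 0 → o = o' := by
    intro o o' c h1 h2 hc
    cases o <;> cases o' <;> simp [famPar] at h1 h2 ⊢
    · exact hc h1.symm
    · rw [h2, ← h1, one_mul]
  rintro ⟨e, o⟩ ⟨e', o'⟩ h
  obtain ⟨c, hc, h1, h2, h3, h4⟩ := scalar_of_projAct_eq F _ _ h
  rw [famGL_val, famGL_val] at h1 h2 h3 h4
  have ho : o = o' := by
    apply hpar o o' c _ _ hc
    · cases e <;> cases e' <;> simpa [famMat] using h2
    · cases e <;> cases e' <;> simpa [famMat] using h4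
  have hne := famPar_ne F o
  have hne' := famPar_ne F o'
  cases e <;> cases e' <;> simp [famMat] at h1 h2 h3 h4
  · rw [ho]
  · exact (hmix _ _ c _ _ hc hne h2 h4 (by rw [h1]; ring) h3).elim
  · exfalso
    refine hmix _ _ c⁻¹ (famPar F o).1 (famPar F o).2 (inv_ne_zero hc) hne' (by rw [h2]; field_simp) (by rw [h4]; field_simp)
      (by rw [h1]; field_simp) (by rw [h3]; field_simp)
  · rw [ho]

theorem stab_card (q : ℕ) (F : Type) [Field F] [Fintype F]
    (hcard : Fintype.card F = q) (hq : 5 ≤ q) (K : Type) [Field K] [Algebra F K]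
    (a b : F) (hr : ∀ x : F, x ^ 2 ≠ a * x + b) (hdisc : a ^ 2 + 4 * b ≠ 0)
    (t : K) (ht : t ^ 2 = algebraMap F K a * t + algebraMap F K b)
    (hn : t ∉ Set.range (algebraMap F K)) :
    (lineStab F (chordLine F a b)).ncard = 2 * (q + 1) := by
  have hrange : lineStab F (chordLine F a b) =
      Set.range (fun p => projAct F (symGL F (famGL F a b hr p))) := by
    apply Set.Subset.antisymm
    · rintro f ⟨hf, hfl⟩
      obtain ⟨M, rfl⟩ := Gq_eq F (hcard ▸ hq) f hf
      obtain ⟨e, he⟩ := stab_cases F K a b t ht hn M hfl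
      by_cases h0 : M.val 0 1 = 0
      · have hs : M.val 1 1 ≠ 0 := by
          intro hs
          apply det_ne F M
          rw [h0, hs]; ring
        refine ⟨(e, none), (projAct_sym_scalar F _ _ (M.val 1 1) hs ?_).symm⟩
        rw [famGL_val]
        refine he.trans ?_
        rw [h0]
        ext i j
        cases e <;> fin_cases i <;> fin_cases j <;> simp [famMat, famPar] <;> ring
      · refine ⟨(e, some (M.val 1 1 / M.val 0 1)),
          (projAct_sym_scalar F _ _ (M.val 0 1) h0 ?_).symm⟩
        rw [famGL_val]
        refine he.trans ?_
        ext i j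
        cases e <;> fin_cases i <;> fin_cases j <;> simp [famMat, famPar] <;> field_simp
    · rintro _ ⟨p, rfl⟩
      refine ⟨symGL_mem_Gq F _, projAct_eq_of_le F _ _ fun v hv => ?_⟩
      exact fam_preserve F a b _ _ _ v hv
  rw [hrange, ← Set.image_univ, Set.ncard_image_of_injective _ (fam_inj F a b hr hdisc),
    Set.ncard_univ, Nat.card_eq_fintype_card, Fintype.card_prod, Fintype.card_bool,
    Fintype.card_option, hcard]

theorem chord_main (q : ℕ) (F : Type) [Field F] [Fintype F]
    (hcard : Fintype.card F = q) (K : Type) [Field K] [Fintype K] [Algebra F K]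
    (hcardK : Fintype.card K = q ^ 2) (hq : 5 ≤ q)
    (a b : F) (hr : ∀ x : F, x ^ 2 ≠ a * x + b) (hdisc : a ^ 2 + 4 * b ≠ 0) :
    isImagChord F K q (chordLine F a b) ∧
      (lineStab F (chordLine F a b)).ncard = 2 * (q + 1) := by
  obtain ⟨t, ht⟩ := exists_quad_root q F hcard K hcardK a b hr
  have hn : t ∉ Set.range (algebraMap F K) := by
    rintro ⟨x, rfl⟩
    apply hr x
    apply (algebraMap F K).injective
    simpa using ht
  exact ⟨chord_imag q F hcard K a b hr t ht hn, stab_card q F hcard hq K a b hr hdisc t ht hn⟩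

theorem stmt_7 (q : ℕ) (F : Type) [Field F] [Fintype F]
    (hcard : Fintype.card F = q) (K : Type) [Field K] [Fintype K] [Algebra F K] (hcardK : Fintype.card K = q ^ 2) (hq : 5 ≤ q) :
    (∀ ρ : F, Odd q → (¬ ∃ s : F, s ^ 2 = ρ) →
      isImagChord F K q (Submodule.span F ({![1, 0, ρ, 0], ![0, 1, 0, ρ]} : Set (Fin 4 → F))) ∧
      (lineStab F (Submodule.span F ({![1, 0, ρ, 0], ![0, 1, 0, ρ]} : Set (Fin 4 → F)))).ncard = 2 * (q + 1)) ∧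
    (∀ (h : ℕ) (η : F), q = 2 ^ h → (∑ i ∈ Finset.range h, η ^ 2 ^ i) = 1 →
      isImagChord F K q (Submodule.span F ({![η + 1, 1, 1, 0], ![η, η, 0, 1]} : Set (Fin 4 → F))) ∧
      (lineStab F (Submodule.span F ({![η + 1, 1, 1, 0], ![η, η, 0, 1]} : Set (Fin 4 → F)))).ncard = 2 * (q + 1)) := by
  refine ⟨fun ρ hodd hns => ?_, fun h η hqh htr => ?_⟩
  · have hρ : ρ ≠ 0 := fun h0 => hns ⟨0, by simp [h0]⟩
    have h2 : (2 : F) ≠ 0 := by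
      intro h2
      have : CharP F 2 := CharTwo.of_one_ne_zero_of_two_eq_zero one_ne_zero h2
      have := FiniteField.even_card_of_char_two (F := F) (ringChar.eq F 2)
      rw [hcard] at this
      exact (Nat.not_even_iff_odd.mpr hodd) (Nat.even_iff.mpr this)
    have hline : Submodule.span F ({![1, 0, ρ, 0], ![0, 1, 0, ρ]} : Set (Fin 4 → F)) =
        chordLine F 0 ρ⁻¹ := by
      apply le_antisymm
      · rw [Submodule.span_le]
        rintro _ (rfl | rfl)
        · rw [SetLike.mem_coe, mem_chordLine]; simp [hρ]
        · rw [SetLike.mem_coe, mem_chordLine]; simp [hρ]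
      · intro v hv
        rw [mem_chordLine] at hv
        rw [Submodule.mem_span_pair]
        refine ⟨v 0, v 1, ?_⟩
        obtain ⟨h0, h1⟩ := hv
        ext i
        fin_cases i <;> simp [h0, h1] <;> field_simp
    rw [hline]
    refine chord_main q F hcard K hcardK hq 0 ρ⁻¹ ?_ ?_
    · intro x hx
      refine hns ⟨x⁻¹, ?_⟩
      rw [inv_pow, hx]; simp
    · have h4 : (4 : F) ≠ 0 := by
        have : (4 : F) = 2 * 2 := by norm_num
        rw [this]; exact mul_ne_zero h2 h2
      simpa using ⟨h4, hρ⟩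
  · have hh : h ≠ 0 := by rintro rfl; simp at hqh; omega
    have h2 : (2 : F) = 0 := by
      have h1 : ((Fintype.card F : ℕ) : F) = 0 := Nat.cast_card_eq_zero F
      rw [hcard, hqh] at h1
      push_cast at h1
      exact pow_eq_zero_iff hh |>.mp h1
    have hch : CharP F 2 := CharTwo.of_one_ne_zero_of_two_eq_zero one_ne_zero h2
    have hline : Submodule.span F ({![η + 1, 1, 1, 0], ![η, η, 0, 1]} : Set (Fin 4 → F)) =
        chordLine F 1 η := by
      unfold chordLine
      rw [one_pow, one_mul, add_comm]
    rw [hline]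
    refine chord_main q F hcard K hcardK hq 1 η ?_ ?_
    · intro x hx
      have hη : η = x ^ 2 - x := by rw [hx]; ring
      have hs : ∀ i ∈ Finset.range h, η ^ 2 ^ i = x ^ 2 ^ (i + 1) - x ^ 2 ^ i := by
        intro i _
        rw [hη, sub_pow_char_pow, ← pow_mul, pow_succ' 2 i]
      rw [Finset.sum_congr rfl hs, Finset.sum_range_sub (fun i => x ^ 2 ^ i), ← hqh, ← hcard,
        FiniteField.pow_card] at htr
      simp at htr
    · have : (4 : F) = 2 * 2 := by norm_num
      rw [this, h2]; simp
end

section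
/- Let q ≢ 0 (mod 3) be a prime power with q ≥ 5. The imaginary axes of the osculating developable Γ of the twisted cubic C form a single orbit of lines under G_q, and the stabilizer in G_q of any imaginary axis has order 2(q+1). Moreover, if q is odd and ρ ∈ F_q is a non-square, the line through (0:1:0:−3ρ) and (−3/ρ:0:1:0) is an imaginary axis; if q is even and η ∈ F_q has absolute trace 1, the line through (η:1:1:0) and (η:η+1:0:1) is an imaginary axis. -/
open Matrix Submodule

set_option linter.unusedSimpArgs false
set_option linter.unusedSectionVars false

namespace TC

def V {F : Type} [Field F] (x y : F) : Fin 4 → F := ![x^3, x^2*y, x*y^2, y^3]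

def M {F : Type} [Field F] (a b c d : F) : Matrix (Fin 4) (Fin 4) F :=
  !![a^3, a^2*c, a*c^2, c^3;
     3*a^2*b, a^2*d+2*a*b*c, 2*a*c*d+b*c^2, 3*c^2*d;
     3*a*b^2, 2*a*b*d+b^2*c, a*d^2+2*b*c*d, 3*c*d^2;
     b^3, b^2*d, b*d^2, d^3]

def Ph {K : Type} [Field K] (x y : K) (v : Fin 4 → K) : K :=
  y^3 * v 0 - 3*x*y^2*v 1 + 3*x^2*y*v 2 - x^3*v 3

section
variable {F : Type} [Field F]

theorem V_M (a b c d x y : F) : (V x y) ᵥ* (M a b c d) = V (a*x+b*y) (c*x+d*y) := by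
  ext i
  fin_cases i <;> simp [V, M, Matrix.vecMul, dotProduct, Fin.sum_univ_four] <;> ring

theorem M_mul (a b c d a' b' c' d' : F) :
    M a b c d * M a' b' c' d' = M (a'*a+b'*c) (a'*b+b'*d) (c'*a+d'*c) (c'*b+d'*d) := by
  ext i j
  fin_cases i <;> fin_cases j <;> simp [M, Matrix.mul_apply, Fin.sum_univ_four] <;> ring

theorem M_one : M (1:F) 0 0 1 = 1 := by
  ext i j
  fin_cases i <;> fin_cases j <;> simp [M]

theorem M_smul (k a b c d : F) : M (k*a) (k*b) (k*c) (k*d) = k^3 • M a b c d := by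
  ext i j
  fin_cases i <;> fin_cases j <;> simp [M] <;> ring

theorem Ph_M (a b c d x y : F) (v : Fin 4 → F) :
    Ph (a*x+b*y) (c*x+d*y) (v ᵥ* M a b c d) = (a*d-b*c)^3 * Ph x y v := by
  simp [Ph, M, Matrix.vecMul, dotProduct, Fin.sum_univ_four]; ring

def act (A : Matrix (Fin 4) (Fin 4) F) (W : Submodule F (Fin 4 → F)) :
    Submodule F (Fin 4 → F) := W.map (Matrix.vecMulLinear A)

def MG (a b c d : F) (h : a*d-b*c ≠ 0) : GL (Fin 4) F where
  val := M a b c d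
  inv := M (d/(a*d-b*c)) (-b/(a*d-b*c)) (-c/(a*d-b*c)) (a/(a*d-b*c))
  val_inv := by
    rw [M_mul, ← M_one]
    have := mul_inv_cancel₀ h
    congr 1 <;> grind
  inv_val := by
    rw [M_mul, ← M_one]
    have := mul_inv_cancel₀ h
    congr 1 <;> grind

theorem projAct_MG (a b c d : F) (h : a*d-b*c ≠ 0) :
    projAct F (MG a b c d h) = act (M a b c d) := rfl

theorem act_span (A : Matrix (Fin 4) (Fin 4) F) (v : Fin 4 → F) :
    act A (span F {v}) = span F {v ᵥ* A} := by
  simp [act, Submodule.map_span]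

theorem act_smul (k : F) (hk : k ≠ 0) (A : Matrix (Fin 4) (Fin 4) F) :
    act (k • A) = act A := by
  funext W
  ext v
  simp only [act, Submodule.mem_map, Matrix.vecMulLinear_apply]
  constructor
  · rintro ⟨w, hw, rfl⟩
    exact ⟨k • w, W.smul_mem _ hw, by simp [Matrix.smul_vecMul, Matrix.vecMul_smul]⟩
  · rintro ⟨w, hw, rfl⟩
    exact ⟨k⁻¹ • w, W.smul_mem _ hw, by
      simp [Matrix.smul_vecMul, Matrix.vecMul_smul, smul_smul, hk]⟩

theorem act_act (A B : Matrix (Fin 4) (Fin 4) F) (W) : act B (act A W) = act (A * B) W := by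
  ext v
  simp [act, Submodule.mem_map, Matrix.vecMul_vecMul]

theorem V_smul (k x y : F) : V (k*x) (k*y) = k^3 • V x y := by
  ext i
  fin_cases i <;> simp [V] <;> ring

theorem V_ne (x y : F) (h : x ≠ 0 ∨ y ≠ 0) : V x y ≠ 0 := by
  intro h0
  have h1 := congrFun h0 0
  have h2 := congrFun h0 3
  simp [V] at h1 h2
  simp_all

theorem span_V_smul (k x y : F) (hk : k ≠ 0) : span F {V (k*x) (k*y)} = span F {V x y} := by
  rw [V_smul]
  exact Submodule.span_singleton_smul_eq (IsUnit.mk0 _ (pow_ne_zero 3 hk)) _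

theorem span_V_inj (x y x' y' : F) (h : x ≠ 0 ∨ y ≠ 0)
    (he : span F {V x y} = span F {V x' y'}) : x * y' = x' * y := by
  have h1 : V x y ∈ span F {V x' y'} := he ▸ Submodule.mem_span_singleton_self _
  obtain ⟨l, hl⟩ := Submodule.mem_span_singleton.1 h1
  have e0 := congrFun hl 0
  have e1 := congrFun hl 1
  have e3 := congrFun hl 3
  simp [V] at e0 e1 e3
  by_cases hx : x = 0
  · subst hx
    have hy : y ≠ 0 := by simpa using h
    have : l ≠ 0 := by
      rintro rfl
      simp at e3; exact hy (by simpa using e3.symm)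
    have : x' = 0 := by simpa [this] using e0
    simp [this]
  · have hl0 : l ≠ 0 := by
      rintro rfl
      simp at e0; exact hx (by simpa using e0.symm)
    have hx' : x' ≠ 0 := by
      rintro rfl
      simp at e0; exact hx (by simpa using e0.symm)
    have : (l * x'^2 * x^2) * (x*y' - x'*y) = 0 := by
      linear_combination x^3 * e1 - x^2*y*e0
    have h4 : l * x'^2 * x^2 ≠ 0 := by positivity
    exact sub_eq_zero.1 ((mul_eq_zero.1 this).resolve_left h4)

theorem mem_cubic (W : Submodule F (Fin 4 → F)) :
    W ∈ twistedCubic F ↔ ∃ x y : F, (x ≠ 0 ∨ y ≠ 0) ∧ W = span F {V x y} := by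
  constructor
  · rintro ⟨v, (⟨t, rfl⟩ | rfl), rfl⟩
    · exact ⟨t, 1, by simp, by simp [V]⟩
    · exact ⟨1, 0, by simp, by simp [V]⟩
  · rintro ⟨x, y, h, rfl⟩
    by_cases hy : y = 0
    · subst hy
      have hx : x ≠ 0 := by simpa using h
      refine ⟨_, Or.inr rfl, ?_⟩
      have := span_V_smul x 1 0 hx
      simp only [mul_one, mul_zero] at this
      rw [this]; simp [V]
    · refine ⟨_, Or.inl ⟨x/y, rfl⟩, ?_⟩
      have := span_V_smul y (x/y) 1 hy
      rw [mul_one, mul_div_cancel₀ _ hy] at this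
      rw [this]; simp [V]

theorem lin_ne (a b c d x y : F) (h : a*d-b*c ≠ 0) (hxy : x ≠ 0 ∨ y ≠ 0) :
    a*x+b*y ≠ 0 ∨ c*x+d*y ≠ 0 := by
  by_contra hc
  push Not at hc
  obtain ⟨h1, h2⟩ := hc
  rcases hxy with hx | hy
  · have : (a*d-b*c)*x = 0 := by linear_combination d*h1 - b*h2
    simp_all
  · have : (a*d-b*c)*y = 0 := by linear_combination a*h2 - c*h1
    simp_all

theorem act_M_mem (a b c d : F) (h : a*d-b*c ≠ 0) : act (M a b c d) ∈ Gq F := by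
  refine ⟨⟨MG a b c d h, rfl⟩, ?_⟩
  ext W
  constructor
  · rintro ⟨U, hU, rfl⟩
    obtain ⟨x, y, hxy, rfl⟩ := (mem_cubic U).1 hU
    rw [mem_cubic, act_span, V_M]
    exact ⟨_, _, lin_ne a b c d x y h hxy, rfl⟩
  · intro hW
    obtain ⟨x, y, hxy, rfl⟩ := (mem_cubic W).1 hW
    refine ⟨span F {V (d*x+(-b)*y) ((-c)*x+a*y)}, ?_, ?_⟩
    · rw [mem_cubic]
      exact ⟨_, _, lin_ne d (-b) (-c) a x y (by intro h'; apply h; linear_combination h') hxy, rfl⟩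
    · rw [act_span, V_M, ← span_V_smul _ x y h]
      congr 3 <;> ring

theorem poly_zero [Fintype F] (hq : 5 ≤ Fintype.card F) (a b c d : F)
    (h : ∀ t : F, t ≠ 0 → a + b*t + c*t^2 + d*t^3 = 0) : a = 0 ∧ b = 0 ∧ c = 0 ∧ d = 0 := by
  classical
  let p : Polynomial F := Polynomial.C a + Polynomial.C b * Polynomial.X
    + Polynomial.C c * Polynomial.X^2 + Polynomial.C d * Polynomial.X^3
  have hp : p = 0 := by
    apply Polynomial.eq_zero_of_natDegree_lt_card_of_eval_eq_zero' p (Finset.univ.erase (0:F))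
    · intro t ht
      simp [p]
      exact h t (by simpa using ht)
    · rw [Finset.card_erase_of_mem (Finset.mem_univ _), Finset.card_univ]
      have : p.natDegree ≤ 3 := by simp only [p]; compute_degree
      omega
  have hc : ∀ n, p.coeff n = 0 := by simp [hp]
  have h0 := hc 0
  have h1 := hc 1
  have h2 := hc 2
  have h3 := hc 3
  simp [p, Polynomial.coeff_X, Polynomial.coeff_X_pow, Polynomial.coeff_C] at h0 h1 h2 h3
  exact ⟨h0, h1, h2, h3⟩

end

section
variable {F : Type} [Field F]

theorem diag_form [Fintype F] (hq : 5 ≤ Fintype.card F) (A : Matrix (Fin 4) (Fin 4) F)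
    (hdet : A.det ≠ 0) (hA : ∀ W ∈ twistedCubic F, act A W ∈ twistedCubic F)
    (h10 : act A (span F {V 1 0}) = span F {V 1 0})
    (h01 : act A (span F {V 0 1}) = span F {V 0 1}) :
    ∃ m δ : F, m ≠ 0 ∧ δ ≠ 0 ∧ A = δ • M m 0 0 1 := by
  obtain ⟨α, hα⟩ : ∃ α : F, α • V 1 0 = V 1 0 ᵥ* A := by
    rw [act_span] at h10
    exact Submodule.mem_span_singleton.1 (h10 ▸ Submodule.mem_span_singleton_self _)
  obtain ⟨δ, hδ⟩ : ∃ δ : F, δ • V 0 1 = V 0 1 ᵥ* A := by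
    rw [act_span] at h01
    exact Submodule.mem_span_singleton.1 (h01 ▸ Submodule.mem_span_singleton_self _)
  have a0 := congrFun hα 0
  have a1 := congrFun hα 1
  have a2 := congrFun hα 2
  have a3 := congrFun hα 3
  have d0 := congrFun hδ 0
  have d1 := congrFun hδ 1
  have d2 := congrFun hδ 2
  have d3 := congrFun hδ 3
  simp [V, Matrix.vecMul, dotProduct, Fin.sum_univ_four] at a0 a1 a2 a3 d0 d1 d2 d3
  have hα0 : α ≠ 0 := by
    rintro rfl
    exact hdet (Matrix.det_eq_zero_of_row_eq_zero 0 (by intro j; fin_cases j <;> simp [← a0, ← a1, ← a2, ← a3]))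
  have hδ0 : δ ≠ 0 := by
    rintro rfl
    exact hdet (Matrix.det_eq_zero_of_row_eq_zero 3 (by intro j; fin_cases j <;> simp [← d0, ← d1, ← d2, ← d3]))
  have key : ∀ t : F, ∀ p : Fin 4 → F, p = V t 1 ᵥ* A → p 1 ^ 2 = p 0 * p 2 ∧ p 1 * p 3 = p 2 ^ 2 := by
    intro t p hp
    have h := hA (span F {V t 1}) ((mem_cubic _).2 ⟨t, 1, by simp, rfl⟩)
    rw [act_span, mem_cubic, ← hp] at h
    obtain ⟨x, y, -, h⟩ := h
    obtain ⟨l, rfl⟩ := Submodule.mem_span_singleton.1 (h ▸ Submodule.mem_span_singleton_self p)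
    simp [V]
    constructor <;> ring
  have e1 := poly_zero hq (A 2 1 ^2 - A 2 0 * A 2 2) (2*A 1 1 * A 2 1 - A 1 0 * A 2 2 - A 2 0 * A 1 2)
    (A 1 1 ^2 - α * A 2 2 - A 1 0 * A 1 2) (-(α * A 1 2)) (by
      intro t ht
      have h := (key t _ rfl).1
      simp [V, Matrix.vecMul, dotProduct, Fin.sum_univ_four, ← a0, ← a1, ← a2, ← a3, ← d0, ← d1, ← d2, ← d3] at h
      apply mul_left_cancel₀ (pow_ne_zero 2 ht)
      linear_combination h)
  have e2 := poly_zero hq (A 2 1 * δ) (A 1 1 * δ + A 2 1 * A 2 3 - A 2 2 ^2)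
    (A 1 1 * A 2 3 + A 2 1 * A 1 3 - 2 * A 1 2 * A 2 2) (A 1 1 * A 1 3 - A 1 2 ^2) (by
      intro t ht
      have h := (key t _ rfl).2
      simp [V, Matrix.vecMul, dotProduct, Fin.sum_univ_four, ← a0, ← a1, ← a2, ← a3, ← d0, ← d1, ← d2, ← d3] at h
      apply mul_left_cancel₀ ht
      linear_combination h)
  obtain ⟨f0, f1, f2, f3⟩ := e1
  obtain ⟨g0, g1, g2, g3⟩ := e2
  have b2 : A 1 2 = 0 := by simpa [hα0] using f3
  have c1 : A 2 1 = 0 := by simpa [hδ0] using g0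
  have b1 : A 1 1 ≠ 0 := by
    intro h
    exact hdet (Matrix.det_eq_zero_of_column_eq_zero 1 (by intro j; fin_cases j <;> simp [← a1, ← d1, c1, h]))
  simp only [b2, c1] at f0 f1 f2 g1 g2 g3
  have b3 : A 1 3 = 0 := by simpa [b1] using g3
  have c3 : A 2 3 = 0 := by simpa [b1] using g2
  have c2 : A 2 2 ≠ 0 := by
    intro h
    rw [h] at g1
    simp [b1, hδ0] at g1
  have b0 : A 1 0 = 0 := by simpa [c2] using f1
  have c0 : A 2 0 = 0 := by simpa [c2] using f0
  refine ⟨A 2 2 / δ, δ, div_ne_zero c2 hδ0, hδ0, ?_⟩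
  have k1 : A 1 1 = A 2 2 ^ 2 / δ := by field_simp; linear_combination g1
  have k2 : α = A 2 2 ^ 3 / δ^2 := by
    rw [eq_div_iff (pow_ne_zero 2 hδ0)]
    rw [k1] at f2
    field_simp at f2
    apply mul_left_cancel₀ c2
    linear_combination -f2
  ext i j
  fin_cases i <;> fin_cases j <;>
    simp [M, ← a0, ← a1, ← a2, ← a3, ← d0, ← d1, ← d2, ← d3, b0, b2, b3, c0, c1, c3]
  · rw [k2]; field_simp
  · rw [k1]; field_simp
  · field_simp

theorem span_V_eq (x y z w : F) (h1 : x ≠ 0 ∨ y ≠ 0) (h2 : z ≠ 0 ∨ w ≠ 0) (h : x * w - z * y = 0) :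
    span F {V x y} = span F {V z w} := by
  by_cases hw : w = 0
  · subst hw
    have hz : z ≠ 0 := by simpa using h2
    have hy : y = 0 := by simpa [hz] using h
    subst hy
    have hx : x ≠ 0 := by simpa using h1
    rw [← span_V_smul (x/z) z 0 (div_ne_zero hx hz), div_mul_cancel₀ _ hz, mul_zero]
  · have hy : y ≠ 0 := by
      rintro rfl
      have : x = 0 := by simpa [hw] using h
      simp [this] at h1
    rw [← span_V_smul (y/w) z w (div_ne_zero hy hw), div_mul_cancel₀ _ hw]
    congr 3
    field_simp
    linear_combination h

theorem Gq_class [Fintype F] (hq : 5 ≤ Fintype.card F) (f) (hf : f ∈ Gq F) :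
    ∃ a b c d : F, a*d-b*c ≠ 0 ∧ f = act (M a b c d) := by
  obtain ⟨⟨A, rfl⟩, hc⟩ := hf
  set A' : Matrix (Fin 4) (Fin 4) F := (A : Matrix (Fin 4) (Fin 4) F) with hA'
  have hp : projAct F A = act A' := rfl
  rw [hp] at hc ⊢
  have hdet : A'.det ≠ 0 := by
    have := A.isUnit
    rw [Matrix.isUnit_iff_isUnit_det] at this
    exact this.ne_zero
  have hmem : ∀ W ∈ twistedCubic F, act A' W ∈ twistedCubic F := fun W hW => hc ▸ ⟨W, hW, rfl⟩
  have hinj : Function.Injective (act A') := by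
    apply Submodule.map_injective_of_injective
    have := Matrix.vecMul_injective_of_isUnit A.isUnit
    exact this
  obtain ⟨x, y, hxy, e1⟩ := (mem_cubic _).1 (hmem (span F {V 1 0}) ((mem_cubic _).2 ⟨1, 0, by simp, rfl⟩))
  obtain ⟨z, w, hzw, e2⟩ := (mem_cubic _).1 (hmem (span F {V 0 1}) ((mem_cubic _).2 ⟨0, 1, by simp, rfl⟩))
  have hD : x * w - z * y ≠ 0 := by
    intro h
    have := hinj ((e1.trans (span_V_eq x y z w hxy hzw h)).trans e2.symm)
    have := span_V_inj 1 0 0 1 (by simp) this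
    simp at this
  have hD' : w * x - (-z)*(-y) ≠ 0 := by
    intro h; apply hD; linear_combination h
  obtain ⟨m, δ, hm, hδ, hB⟩ := diag_form hq (A' * M w (-z) (-y) x)
    (by
      rw [Matrix.det_mul]
      refine mul_ne_zero hdet ?_
      have := (MG w (-z) (-y) x hD').isUnit
      rw [Matrix.isUnit_iff_isUnit_det] at this
      exact this.ne_zero)
    (by
      intro W hW
      rw [← act_act]
      have := (act_M_mem w (-z) (-y) x hD').2
      rw [← this]
      exact ⟨_, hmem W hW, rfl⟩)
    (by
      rw [← act_act, e1, act_span, V_M, ← span_V_smul _ 1 0 hD]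
      congr 3 <;> ring)
    (by
      rw [← act_act, e2, act_span, V_M, ← span_V_smul _ 0 1 hD]
      congr 3 <;> ring)
  refine ⟨x*m, z, y*m, w, ?_, ?_⟩
  · have := mul_ne_zero hm hD
    intro h; apply this; linear_combination h
  · have h := congrArg (· * M x z y w) hB
    simp only [Matrix.mul_assoc, M_mul, Matrix.smul_mul] at h
    have h1 : M (x * w + z * -y) (x * -z + z * x) (y * w + w * -y) (y * -z + w * x)
        = (x*w-z*y)^3 • (1 : Matrix (Fin 4) (Fin 4) F) := by
      rw [← M_one, ← M_smul]
      congr 1 <;> ring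
    rw [h1, Matrix.mul_smul, mul_one] at h
    rw [← act_smul _ (pow_ne_zero 3 hD), h, act_smul _ hδ]
    congr 2 <;> ring

theorem act_M_inj (a b c d a' b' c' d' : F) (h : a*d-b*c ≠ 0)
    (he : act (M a b c d) = act (M a' b' c' d')) :
    a*c' = a'*c ∧ b*d' = b'*d ∧ a*d'+b*c' = a'*d + b'*c := by
  have key : ∀ x y : F, (x ≠ 0 ∨ y ≠ 0) → (a*x+b*y)*(c'*x+d'*y) = (a'*x+b'*y)*(c*x+d*y) := by
    intro x y hxy
    have := congrFun he (span F {V x y})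
    rw [act_span, act_span, V_M, V_M] at this
    exact span_V_inj _ _ _ _ (lin_ne a b c d x y h hxy) this
  have k1 := key 1 0 (by simp)
  have k2 := key 0 1 (by simp)
  have k3 := key 1 1 (by simp)
  simp at k1 k2 k3
  exact ⟨k1, k2, by linear_combination k3 - k1 - k2⟩

end

section
variable {F K : Type} [Field F] [Fintype F] [Field K] [Fintype K] [Algebra F K]

def Im (F : Type) {K : Type} [Field F] [Field K] [Algebra F K] (t : K) : Prop :=
  t ∉ Set.range (algebraMap F K)

theorem m3 : algebraMap F K 3 = 3 := map_ofNat _ 3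

theorem three_ne (hq3 : Fintype.card F % 3 ≠ 0) : (3 : F) ≠ 0 := by
  intro h3
  have h : (Fintype.card F : F) = 0 := FiniteField.cast_card_eq_zero F
  rw [← Nat.div_add_mod (Fintype.card F) 3] at h
  push_cast at h
  rw [h3, zero_mul, zero_add] at h
  have : Fintype.card F % 3 = 1 ∨ Fintype.card F % 3 = 2 := by omega
  rcases this with h' | h' <;> rw [h'] at h
  · simp at h
  · push_cast at h
    exact one_ne_zero (α := F) (by linear_combination h3 - h)

theorem fixed_mem (x : K) (h : x ^ Fintype.card F = x) : x ∈ Set.range (algebraMap F K) := by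
  classical
  let S : Finset K := Finset.univ.filter (fun x => x ^ Fintype.card F = x)
  have h1 : Finset.univ.image (algebraMap F K) ⊆ S := by
    intro y hy
    obtain ⟨z, -, rfl⟩ := Finset.mem_image.1 hy
    simp [S, ← map_pow, FiniteField.pow_card]
  have hn : 1 < Fintype.card F := Fintype.one_lt_card
  have h2 : S.card ≤ Fintype.card F := by
    have hne := FiniteField.X_pow_card_sub_X_ne_zero K hn
    have hd := FiniteField.X_pow_card_sub_X_natDegree_eq K hn
    rw [← hd]
    refine le_trans ?_ (Polynomial.card_roots' _)
    refine le_trans (Finset.card_le_card ?_) (Multiset.toFinset_card_le _)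
    intro y hy
    rw [Multiset.mem_toFinset, Polynomial.mem_roots hne]
    have : y ^ Fintype.card F = y := by simpa [S] using hy
    simp [this]
  have h3 : Finset.univ.image (algebraMap F K) = S := by
    apply Finset.eq_of_subset_of_card_le h1
    rw [Finset.card_image_of_injective _ (algebraMap F K).injective, Finset.card_univ]
    exact h2
  have : x ∈ S := by simp [S, h]
  rw [← h3] at this
  obtain ⟨z, -, hz⟩ := Finset.mem_image.1 this
  exact ⟨z, hz⟩

theorem indep {t : K} (ht : Im F t) (a b : F) (h : algebraMap F K a * t + algebraMap F K b = 0) :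
    a = 0 ∧ b = 0 := by
  have ha : a = 0 := by
    by_contra ha
    apply ht
    refine ⟨-b/a, ?_⟩
    have : algebraMap F K a ≠ 0 := by simpa using ha
    rw [map_div₀, map_neg]
    field_simp
    linear_combination -h
  subst ha
  simpa using h

theorem basis (hK : Fintype.card K = Fintype.card F ^ 2) {t : K} (ht : Im F t) (z : K) :
    ∃ a b : F, algebraMap F K a * t + algebraMap F K b = z := by
  have hb : Function.Bijective (fun p : F × F => algebraMap F K p.1 * t + algebraMap F K p.2) := by
    rw [Fintype.bijective_iff_injective_and_card]
    constructor
    · rintro ⟨a, b⟩ ⟨a', b'⟩ h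
      have := indep ht (a - a') (b - b') (by simp at h ⊢; linear_combination h)
      simp [sub_eq_zero] at this
      simp [this]
    · rw [Fintype.card_prod, hK, sq]
  obtain ⟨⟨a, b⟩, h⟩ := hb.2 z
  exact ⟨a, b, h⟩

theorem exists_im (hK : Fintype.card K = Fintype.card F ^ 2) : ∃ t : K, Im F t := by
  by_contra h
  have hs : Function.Surjective (algebraMap F K) := by
    intro t
    by_contra ht
    exact h ⟨t, ht⟩
  have := Fintype.card_le_of_surjective _ hs
  have hn : 1 < Fintype.card F := Fintype.one_lt_card
  nlinarith

def ext (F : Type) {K : Type} [Field F] [Field K] [Algebra F K] (v : Fin 4 → F) : Fin 4 → K :=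
  fun i => algebraMap F K (v i)

def L (F : Type) {K : Type} [Field F] [Field K] [Algebra F K] (t : K) : Submodule F (Fin 4 → F) where
  carrier := {v | Ph t 1 (ext F v) = 0}
  add_mem' := by
    intro u v hu hv
    simp [Ph, ext] at hu hv ⊢
    linear_combination hu + hv
  zero_mem' := by simp [Ph, ext]
  smul_mem' := by
    intro k v hv
    simp [Ph, ext] at hv ⊢
    linear_combination algebraMap F K k * hv

theorem mem_L (t : K) (v : Fin 4 → F) : v ∈ L F t ↔ Ph t 1 (ext F v) = 0 := Iff.rfl

theorem quad (hK : Fintype.card K = Fintype.card F ^ 2) {t : K} (ht : Im F t) :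
    ∃ T N : F, t^2 = algebraMap F K T * t - algebraMap F K N ∧
      (t ^ Fintype.card F)^2 = algebraMap F K T * t ^ Fintype.card F - algebraMap F K N := by
  obtain ⟨T, N, h⟩ := basis hK ht (t^2)
  refine ⟨T, -N, by simp [h], ?_⟩
  have := congrArg (FiniteField.frobeniusAlgHom F K) h
  simp only [map_add, map_mul, AlgHom.commutes, map_pow] at this
  simp only [FiniteField.coe_frobeniusAlgHom] at this
  simp [this]

theorem conj_ne {t : K} (ht : Im F t) : t ^ Fintype.card F ≠ t := fun h => ht (fixed_mem t h)

theorem conj_im {t : K} (ht : Im F t) : Im F (t ^ Fintype.card F) := by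
  rintro ⟨a, ha⟩
  have : FiniteField.frobeniusAlgHom F K (algebraMap F K a) = FiniteField.frobeniusAlgHom F K t := by
    rw [AlgHom.commutes, ha]; rfl
  exact ht ⟨a, (FiniteField.frobeniusAlgHom F K).toRingHom.injective this⟩

theorem Ph_conj (t : K) (v : Fin 4 → F) :
    Ph (t ^ Fintype.card F) 1 (ext F v) = (Ph t 1 (ext F v)) ^ Fintype.card F := by
  have : FiniteField.frobeniusAlgHom F K (Ph t 1 (ext F v)) = (Ph t 1 (ext F v)) ^ Fintype.card F := rfl
  rw [← this]
  simp only [Ph, ext, map_sub, map_add, map_mul, map_pow, AlgHom.commutes, map_one, map_ofNat]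
  rfl

theorem L_conj (t : K) : L F (t ^ Fintype.card F) = L F t := by
  ext v
  rw [mem_L, mem_L, Ph_conj]
  simp [Fintype.card_ne_zero]

def w2 (T N : F) : Fin 4 → F := ![3*N, T, 1, 0]
def w3 (T N : F) : Fin 4 → F := ![-(T*N), -(T^2-N)/3, 0, 1]

theorem Ph_eq {t : K} {T N : F} (h : t^2 = algebraMap F K T * t - algebraMap F K N) (v : Fin 4 → K) :
    Ph t 1 v = (v 0 - 3 * algebraMap F K N * v 2 + algebraMap F K T * algebraMap F K N * v 3) +
      t * (-3 * v 1 + 3 * algebraMap F K T * v 2 - (algebraMap F K T ^ 2 - algebraMap F K N) * v 3) := by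
  simp only [Ph]
  linear_combination (3 * v 2 - (t + algebraMap F K T) * v 3) * h

theorem L_eq (h3 : (3 : F) ≠ 0) {t : K} (ht : Im F t) {T N : F}
    (h : t^2 = algebraMap F K T * t - algebraMap F K N) :
    L F t = span F {w2 T N, w3 T N} := by
  have h3K : (3 : K) ≠ 0 := by
    rw [← m3 (F := F), Ne, map_eq_zero]; exact h3
  ext v
  rw [mem_L, Ph_eq h, Submodule.mem_span_pair]
  constructor
  · intro hv
    have := indep ht (-3 * v 1 + 3 * T * v 2 - (T^2-N) * v 3) (v 0 - 3 * N * v 2 + T*N * v 3)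
      (by simp [ext, m3] at hv ⊢; linear_combination hv)
    refine ⟨v 2, v 3, ?_⟩
    ext i
    fin_cases i <;> simp [w2, w3]
    · linear_combination -this.2
    · field_simp; linear_combination this.1
  · rintro ⟨a, b, rfl⟩
    simp [w2, w3, ext, m3]
    field_simp
    ring

theorem finrank_L (hK : Fintype.card K = Fintype.card F ^ 2) (h3 : (3 : F) ≠ 0) {t : K} (ht : Im F t) :
    Module.finrank F (L F t) = 2 := by
  obtain ⟨T, N, h, -⟩ := quad hK ht
  rw [L_eq h3 ht h]
  have hli : LinearIndependent F ![w2 T N, w3 T N] := by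
    rw [LinearIndependent.pair_iff]
    intro a b hab
    have e2 := congrFun hab 2
    have e3 := congrFun hab 3
    simp [w2, w3] at e2 e3
    exact ⟨e2, e3⟩
  have hr : ({w2 T N, w3 T N} : Set (Fin 4 → F)) = Set.range ![w2 T N, w3 T N] := by
    rw [Matrix.range_cons, Matrix.range_cons, Matrix.range_empty, Set.union_empty]
    rfl
  have hc := finrank_span_eq_card hli
  rw [← hr] at hc
  rw [hc]
  rfl

theorem ext_L (hK : Fintype.card K = Fintype.card F ^ 2) (h3 : (3 : F) ≠ 0) {t : K} (ht : Im F t) :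
    extendSub F K (L F t) = planeOf K ![1, -(3 * t), 3 * t ^ 2, -(t ^ 3)] ⊓
        planeOf K ![1, -(3 * t ^ Fintype.card F), 3 * (t ^ Fintype.card F) ^ 2, -((t ^ Fintype.card F) ^ 3)] := by
  have hpl : ∀ (s : K) v, v ∈ planeOf K ![1, -(3 * s), 3 * s ^ 2, -(s ^ 3)] ↔ Ph s 1 v = 0 := by
    intro s v
    simp [planeOf, planeForm, Ph]
    constructor <;> intro h <;> linear_combination h
  have h3K : (3 : K) ≠ 0 := by
    rw [← m3 (F := F), Ne, map_eq_zero]; exact h3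
  apply le_antisymm
  · rw [extendSub, Submodule.span_le]
    rintro _ ⟨v, hv, rfl⟩
    have hv' : Ph t 1 (ext F v) = 0 := hv
    have hv2 := hv'
    rw [← mem_L, ← L_conj, mem_L] at hv2
    exact ⟨(hpl _ _).2 hv', (hpl _ _).2 hv2⟩
  · rintro v ⟨ha, hb⟩
    have ha := (hpl _ _).1 ha
    have hb := (hpl _ _).1 hb
    obtain ⟨T, N, h, h'⟩ := quad hK ht
    rw [Ph_eq h] at ha
    rw [Ph_eq h'] at hb
    have hne := conj_ne ht
    have hB : (-3 * v 1 + 3 * algebraMap F K T * v 2 - (algebraMap F K T ^ 2 - algebraMap F K N) * v 3) = 0 := by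
      apply mul_left_cancel₀ (sub_ne_zero.2 hne)
      linear_combination hb - ha
    rw [hB] at ha
    have hv : v = v 2 • ext F (w2 T N) + v 3 • ext F (w3 T N) := by
      ext i
      fin_cases i <;> simp [w2, w3, ext, m3]
      · linear_combination ha
      · field_simp; linear_combination -hB
    rw [hv]
    have hL := L_eq h3 ht h
    refine add_mem (Submodule.smul_mem _ _ (Submodule.subset_span ⟨w2 T N, ?_, rfl⟩))
      (Submodule.smul_mem _ _ (Submodule.subset_span ⟨w3 T N, ?_, rfl⟩))
    · rw [hL]; exact Submodule.subset_span (by simp)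
    · rw [hL]; exact Submodule.subset_span (by simp)

theorem axis_iff (hK : Fintype.card K = Fintype.card F ^ 2) (h3 : (3 : F) ≠ 0)
    (l : Submodule F (Fin 4 → F)) :
    isImagAxis F K (Fintype.card F) l ↔ ∃ t : K, Im F t ∧ l = L F t := by
  constructor
  · rintro ⟨hl, t, ht, he⟩
    refine ⟨t, ht, ?_⟩
    apply Submodule.eq_of_le_of_finrank_eq
    · intro v hv
      have : ext F v ∈ extendSub F K l := Submodule.subset_span ⟨v, hv, rfl⟩
      rw [he] at this
      have := this.1
      simp [planeOf, planeForm] at this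
      rw [mem_L]
      simp only [Ph]
      linear_combination this
    · rw [finrank_L hK h3 ht]; exact hl
  · rintro ⟨t, ht, rfl⟩
    exact ⟨finrank_L hK h3 ht, t, ht, ext_L hK h3 ht⟩

theorem L_inj (hK : Fintype.card K = Fintype.card F ^ 2) (h3 : (3 : F) ≠ 0) {t s : K} (ht : Im F t)
    (he : L F s = L F t) : s = t ∨ s = t ^ Fintype.card F := by
  obtain ⟨T, N, h, h'⟩ := quad hK ht
  have h3K : (3 : K) ≠ 0 := by
    rw [← m3 (F := F), Ne, map_eq_zero]; exact h3
  have hm : w2 T N ∈ L F s := by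
    rw [he, L_eq h3 ht h]; exact Submodule.subset_span (by simp)
  rw [mem_L] at hm
  simp [Ph, w2, ext, m3] at hm
  have hs : s^2 - algebraMap F K T * s + algebraMap F K N = 0 := by
    apply mul_left_cancel₀ h3K
    linear_combination hm
  have hT : algebraMap F K T = t + t ^ Fintype.card F := by
    apply mul_left_cancel₀ (sub_ne_zero.2 (conj_ne ht))
    linear_combination h - h'
  have : (s - t) * (s - t ^ Fintype.card F) = 0 := by
    linear_combination hs - h + (s - t) * hT
  rcases mul_eq_zero.1 this with h | h
  · left; exact sub_eq_zero.1 h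
  · right; exact sub_eq_zero.1 h

end

section
variable {F K : Type} [Field F] [Fintype F] [Field K] [Fintype K] [Algebra F K]

theorem ext_vecMul (a b c d : F) (v : Fin 4 → F) :
    (ext F (v ᵥ* M a b c d) : Fin 4 → K) = ext F v ᵥ* M (algebraMap F K a) (algebraMap F K b)
      (algebraMap F K c) (algebraMap F K d) := by
  have m2 : algebraMap F K 2 = 2 := map_ofNat _ 2
  ext i
  fin_cases i <;> simp [ext, M, Matrix.vecMul, dotProduct, Fin.sum_univ_four, m3, m2]

theorem den_ne {t : K} (ht : Im F t) (c d : F) (h : c ≠ 0 ∨ d ≠ 0) :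
    algebraMap F K c * t + algebraMap F K d ≠ 0 := by
  intro h0
  have := indep ht c d h0
  simp_all

theorem act_L {t : K} (ht : Im F t) {s : K} (a b c d : F) (h : a*d-b*c ≠ 0)
    (hs : algebraMap F K a * t + algebraMap F K b = s * (algebraMap F K c * t + algebraMap F K d)) :
    Im F s ∧ act (M a b c d) (L F t) = L F s := by
  have hcd : c ≠ 0 ∨ d ≠ 0 := by
    by_contra hc
    push Not at hc
    apply h; simp [hc]
  have hne := den_ne ht c d hcd
  have key : ∀ v : Fin 4 → F, (algebraMap F K c * t + algebraMap F K d)^3 * Ph s 1 (ext F (v ᵥ* M a b c d))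
      = (algebraMap F K a * algebraMap F K d - algebraMap F K b * algebraMap F K c)^3 * Ph t 1 (ext F v) := by
    intro v
    rw [← Ph_M, ext_vecMul, mul_one, mul_one, hs]
    simp only [Ph]
    ring
  have hdK : algebraMap F K a * algebraMap F K d - algebraMap F K b * algebraMap F K c ≠ 0 := by
    rw [← map_mul, ← map_mul, ← map_sub, Ne, map_eq_zero]; exact h
  constructor
  · rintro ⟨r, rfl⟩
    have := indep ht (a - r*c) (b - r*d) (by simp; linear_combination hs)
    apply h
    linear_combination d * this.1 - c * this.2
  · apply le_antisymm
    · rintro _ ⟨v, hv, rfl⟩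
      have hv' : Ph t 1 (ext F v) = 0 := hv
      have := key v
      rw [hv', mul_zero] at this
      exact (mul_eq_zero.1 this).resolve_left (pow_ne_zero 3 hne)
    · intro w hw
      have hmul : (((MG a b c d h)⁻¹ : GL (Fin 4) F) : Matrix (Fin 4) (Fin 4) F) * M a b c d = 1 :=
        (MG a b c d h).inv_mul
      have hw2 : (w ᵥ* (((MG a b c d h)⁻¹ : GL (Fin 4) F) : Matrix (Fin 4) (Fin 4) F)) ᵥ* M a b c d = w := by
        rw [Matrix.vecMul_vecMul, hmul, Matrix.vecMul_one]
      refine ⟨_, ?_, hw2⟩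
      have hw' : Ph s 1 (ext F w) = 0 := hw
      have := key (w ᵥ* (((MG a b c d h)⁻¹ : GL (Fin 4) F) : Matrix (Fin 4) (Fin 4) F))
      rw [hw2, hw', mul_zero] at this
      exact (mul_eq_zero.1 this.symm).resolve_left (pow_ne_zero 3 hdK)

theorem det_ne {t s : K} (ht : Im F t) (hsI : Im F s) (a b c d : F) (hcd : c ≠ 0 ∨ d ≠ 0)
    (hs : algebraMap F K a * t + algebraMap F K b = s * (algebraMap F K c * t + algebraMap F K d)) :
    a*d-b*c ≠ 0 := by
  intro h
  have hne := den_ne ht c d hcd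
  have hK : algebraMap F K a * algebraMap F K d - algebraMap F K b * algebraMap F K c = 0 := by
    rw [← map_mul, ← map_mul, ← map_sub, h, map_zero]
  by_cases hc : c = 0
  · subst hc
    have hd : d ≠ 0 := by simpa using hcd
    have ha : a = 0 := by simpa [hd] using h
    subst ha
    have hd' : algebraMap F K d ≠ 0 := by simpa using hd
    apply hsI
    refine ⟨b/d, ?_⟩
    rw [map_div₀]
    field_simp
    simp at hs
    linear_combination hs
  · have hc' : algebraMap F K c ≠ 0 := by simpa using hc
    apply hsI
    refine ⟨a/c, ?_⟩
    rw [map_div₀]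
    field_simp
    apply mul_right_cancel₀ hne
    linear_combination algebraMap F K c * hs + hK

theorem orbit (hK : Fintype.card K = Fintype.card F ^ 2) (h3 : (3 : F) ≠ 0) (hq : 5 ≤ Fintype.card F)
    {t : K} (ht : Im F t) :
    {l : Submodule F (Fin 4 → F) | isImagAxis F K (Fintype.card F) l} = lineOrbit F (L F t) := by
  ext l
  rw [Set.mem_setOf_eq, axis_iff hK h3]
  constructor
  · rintro ⟨s, hs, rfl⟩
    obtain ⟨a, b, hab⟩ := basis hK ht s
    have hab' : algebraMap F K a * t + algebraMap F K b = s * (algebraMap F K 0 * t + algebraMap F K 1) := by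
      simp [hab]
    have hd := det_ne ht hs a b 0 1 (by simp) hab'
    exact ⟨act (M a b 0 1), act_M_mem a b 0 1 hd, (act_L ht a b 0 1 hd hab').2⟩
  · rintro ⟨f, hf, rfl⟩
    obtain ⟨a, b, c, d, hd, rfl⟩ := Gq_class hq f hf
    have hcd : c ≠ 0 ∨ d ≠ 0 := by
      by_contra hc
      push Not at hc
      apply hd; simp [hc]
    have hne := den_ne ht c d hcd
    obtain ⟨h1, h2⟩ := act_L ht (s := (algebraMap F K a * t + algebraMap F K b) /
      (algebraMap F K c * t + algebraMap F K d)) a b c d hd (by rw [div_mul_cancel₀ _ hne])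
    exact ⟨_, h1, h2⟩

def cc {F : Type} [Field F] : Option F → F
  | none => 0
  | some _ => 1

def dd {F : Type} [Field F] : Option F → F
  | none => 1
  | some d => d

theorem ccdd (o : Option F) : cc o ≠ 0 ∨ dd o ≠ 0 := by
  cases o <;> simp [cc, dd]

theorem stab (hK : Fintype.card K = Fintype.card F ^ 2) (h3 : (3 : F) ≠ 0) (hq : 5 ≤ Fintype.card F)
    {t : K} (ht : Im F t) :
    (lineStab F (L F t)).ncard = 2 * (Fintype.card F + 1) := by
  choose A B hAB using basis hK ht
  let u : K × Option F → K := fun p => p.1 * (algebraMap F K (cc p.2) * t + algebraMap F K (dd p.2))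
  let f : K × Option F → (Submodule F (Fin 4 → F) → Submodule F (Fin 4 → F)) :=
    fun p => act (M (A (u p)) (B (u p)) (cc p.2) (dd p.2))
  let S : Set (K × Option F) := ({t, t ^ Fintype.card F} : Set K) ×ˢ Set.univ
  have hSI : ∀ p ∈ S, Im F p.1 := by
    rintro ⟨s, o⟩ ⟨hs, -⟩
    rcases hs with hs | hs
    · rw [hs]; exact ht
    · rw [hs]; exact conj_im ht
  have hSd : ∀ p ∈ S, A (u p) * dd p.2 - B (u p) * cc p.2 ≠ 0 := fun p hp =>
    det_ne ht (hSI p hp) _ _ _ _ (ccdd _) (hAB (u p))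
  have hinj : Set.InjOn f S := by
    rintro ⟨s, o⟩ hp ⟨s', o'⟩ hp' he
    have hd := hSd _ hp
    have hd' := hSd _ hp'
    obtain ⟨k1, k2, k3⟩ := act_M_inj _ _ _ _ _ _ _ _ hd he
    have h1 := hAB (u (s, o))
    have h2 := hAB (u (s', o'))
    generalize A (u (s, o)) = a at *
    generalize B (u (s, o)) = b at *
    generalize A (u (s', o')) = a' at *
    generalize B (u (s', o')) = b' at *
    have hall : a = a' ∧ b = b' ∧ o = o' := by
      cases o with
      | none =>
        cases o' with
        | none => simp [cc, dd] at *; exact ⟨k3, k2⟩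
        | some d' => exfalso; simp [cc, dd] at *; exact hd k1
      | some d =>
        cases o' with
        | none => exfalso; simp [cc, dd] at *; exact hd' k1.symm
        | some d' =>
          simp [cc, dd] at *
          subst k1
          have hdd : d = d' := by
            by_contra hne
            apply hd
            apply mul_left_cancel₀ (sub_ne_zero.2 hne)
            linear_combination k2 - d * k3
          subst hdd
          exact ⟨rfl, by linear_combination k3, rfl⟩
    obtain ⟨rfl, rfl, rfl⟩ := hall
    have := mul_right_cancel₀ (den_ne ht _ _ (ccdd o)) (h1.symm.trans h2)
    simpa using this
  have himg : lineStab F (L F t) = f '' S := by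
    ext g
    constructor
    · rintro ⟨hg, hgl⟩
      obtain ⟨a, b, c, d, hd, rfl⟩ := Gq_class hq g hg
      have hcd : c ≠ 0 ∨ d ≠ 0 := by
        by_contra hc
        push Not at hc
        apply hd; simp [hc]
      have hne := den_ne ht c d hcd
      obtain ⟨s, hs⟩ : ∃ s : K, algebraMap F K a * t + algebraMap F K b =
          s * (algebraMap F K c * t + algebraMap F K d) :=
        ⟨_, (div_mul_cancel₀ _ hne).symm⟩
      have h2 := (act_L ht a b c d hd hs).2
      have hsS := L_inj hK h3 ht (h2.symm.trans hgl)
      obtain ⟨k, o, hk, hc, hd'⟩ : ∃ (k : F) (o : Option F), k ≠ 0 ∧ cc o = k * c ∧ dd o = k * d := by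
        by_cases hc : c = 0
        · subst hc
          have hd0 : d ≠ 0 := by simpa using hcd
          exact ⟨d⁻¹, none, inv_ne_zero hd0, by simp [cc], by simp [dd, hd0]⟩
        · exact ⟨c⁻¹, some (c⁻¹ * d), inv_ne_zero hc, by simp [cc, hc], by simp [dd]⟩
      refine ⟨(s, o), ⟨hsS, Set.mem_univ _⟩, ?_⟩
      have h1 := hAB (u (s, o))
      have hu : u (s, o) = algebraMap F K (k*a) * t + algebraMap F K (k*b) := by
        simp only [u, hc, hd', map_mul]
        linear_combination -algebraMap F K k * hs
      have h4 := indep ht (A (u (s, o)) - k*a) (B (u (s, o)) - k*b) (by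
        rw [map_sub, map_sub]
        linear_combination h1 + hu)
      have hA := sub_eq_zero.1 h4.1
      have hB := sub_eq_zero.1 h4.2
      show act (M (A (u (s, o))) (B (u (s, o))) (cc o) (dd o)) = _
      rw [hA, hB, hc, hd', M_smul, act_smul _ (pow_ne_zero 3 hk)]
    · rintro ⟨p, hp, rfl⟩
      refine ⟨act_M_mem _ _ _ _ (hSd p hp), ?_⟩
      have := (act_L ht _ _ _ _ (hSd p hp) (hAB (u p))).2
      refine this.trans ?_
      rcases hp.1 with h | h
      · rw [h]
      · rw [h, L_conj]
  rw [himg, Set.ncard_image_of_injOn hinj, Set.ncard_prod, Set.ncard_pair (conj_ne ht).symm,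
    Set.ncard_univ]
  simp

open Polynomial in
theorem quad_root (hK : Fintype.card K = Fintype.card F ^ 2) (T N : F)
    (hr : ∀ x : F, x^2 - T*x + N ≠ 0) :
    ∃ t : K, Im F t ∧ t^2 = algebraMap F K T * t - algebraMap F K N := by
  let p : F[X] := X^2 - C T * X + C N
  have hdeg : p.natDegree = 2 := by simp only [p]; compute_degree!
  have hp0 : p ≠ 0 := by
    intro h; rw [h] at hdeg; simp at hdeg
  have hirr : Irreducible p := by
    rw [Polynomial.irreducible_iff_roots_eq_zero_of_degree_le_three (by omega) (by omega)]
    rw [Multiset.eq_zero_iff_forall_notMem]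
    intro x hx
    rw [Polynomial.mem_roots hp0] at hx
    simp [p] at hx
    exact hr x hx
  have : Fact (Irreducible p) := ⟨hirr⟩
  have hf1 : Module.finrank F (AdjoinRoot p) = 2 := by
    rw [(AdjoinRoot.powerBasis hp0).finrank, AdjoinRoot.powerBasis_dim, hdeg]
  have hf2 : Module.finrank F K = 2 := by
    have := Module.card_eq_pow_finrank (K := F) (V := K)
    rw [hK] at this
    exact (Nat.pow_right_injective (Fintype.one_lt_card (α := F)) this).symm
  have : FiniteDimensional F (AdjoinRoot p) := Module.finite_of_finrank_pos (by omega)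
  obtain ⟨φ⟩ := FiniteField.nonempty_algHom_of_finrank_dvd (F := F) (K := AdjoinRoot p) (L := K)
    (by rw [hf1, hf2])
  have hroot : (φ (AdjoinRoot.root p))^2 - algebraMap F K T * φ (AdjoinRoot.root p) + algebraMap F K N = 0 := by
    have h := AdjoinRoot.aeval_eq (f := p) p
    rw [AdjoinRoot.mk_self] at h
    have h := congrArg φ h
    rw [← Polynomial.aeval_algHom_apply] at h
    rw [map_zero] at h
    generalize φ (AdjoinRoot.root p) = z at h ⊢
    simpa only [p, map_add, map_sub, map_mul, map_pow, Polynomial.aeval_X, Polynomial.aeval_C] using h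
  refine ⟨φ (AdjoinRoot.root p), ?_, by linear_combination hroot⟩
  rintro ⟨x, hx⟩
  rw [← hx, ← map_pow, ← map_mul, ← map_sub, ← map_add, map_eq_zero] at hroot
  exact hr x hroot

theorem odd_axis (hK : Fintype.card K = Fintype.card F ^ 2) (h3 : (3 : F) ≠ 0) (ρ : F)
    (hρ : ¬ ∃ s : F, s ^ 2 = ρ) :
    isImagAxis F K (Fintype.card F)
      (Submodule.span F ({![0, 1, 0, -(3 * ρ)], ![-(3 / ρ), 0, 1, 0]} : Set (Fin 4 → F))) := by
  have hρ0 : ρ ≠ 0 := by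
    rintro rfl
    exact hρ ⟨0, by simp⟩
  obtain ⟨t, ht, h⟩ := quad_root hK 0 (-ρ⁻¹) (by
    intro x hx
    apply hρ
    have hx2 : x^2 = ρ⁻¹ := by linear_combination hx
    exact ⟨x⁻¹, by rw [inv_pow, hx2, inv_inv]⟩)
  rw [axis_iff hK h3]
  refine ⟨t, ht, ?_⟩
  rw [L_eq h3 ht h]
  have e1 : ![0, 1, 0, -(3 * ρ)] = (-(3*ρ)) • w3 0 (-ρ⁻¹) := by
    ext i
    fin_cases i <;> simp [w3]
    field_simp
  have e2 : ![-(3 / ρ), 0, 1, 0] = w2 0 (-ρ⁻¹) := by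
    ext i
    fin_cases i <;> simp [w2]
    field_simp
  rw [e1, e2, Set.pair_comm, Submodule.span_insert, Submodule.span_insert,
    Submodule.span_singleton_smul_eq (IsUnit.mk0 _ (neg_ne_zero.2 (mul_ne_zero h3 hρ0)))]

theorem even_axis (hK : Fintype.card K = Fintype.card F ^ 2) (h3 : (3 : F) ≠ 0) (h : ℕ) (η : F)
    (hh : Fintype.card F = 2 ^ h) (hη : (∑ i ∈ Finset.range h, η ^ 2 ^ i) = 1) :
    isImagAxis F K (Fintype.card F)
      (Submodule.span F ({![η, 1, 1, 0], ![η, η + 1, 0, 1]} : Set (Fin 4 → F))) := by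
  have h2 : (2 : F) = 0 := by
    have := FiniteField.cast_card_eq_zero F
    rw [hh] at this
    push_cast at this
    exact eq_zero_of_pow_eq_zero this
  have : CharP F 2 := CharTwo.of_one_ne_zero_of_two_eq_zero one_ne_zero h2
  obtain ⟨t, ht, hq⟩ := quad_root hK 1 η (by
    intro x hx
    have hx2 : η = x^2 + x := by linear_combination hx - (x^2) * h2
    have htel : ∀ n : ℕ, (∑ i ∈ Finset.range n, η ^ 2 ^ i) = x ^ 2 ^ n + x := by
      intro n
      induction n with
      | zero => simp; linear_combination -x * h2
      | succ n ih =>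
        rw [Finset.sum_range_succ, ih, hx2, add_pow_char_pow, ← pow_mul, ← pow_succ']
        linear_combination x^2^n * h2
    rw [htel, ← hh, FiniteField.pow_card] at hη
    apply one_ne_zero (α := F)
    linear_combination -hη + x * h2)
  rw [axis_iff hK h3]
  refine ⟨t, ht, ?_⟩
  rw [L_eq h3 ht hq]
  have e1 : ![η, 1, 1, 0] = w2 1 η := by
    ext i
    fin_cases i <;> simp [w2]
    linear_combination -η * h2
  have e2 : ![η, η + 1, 0, 1] = w3 1 η := by
    ext i
    fin_cases i <;> simp [w3]
    · linear_combination η * h2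
    · field_simp
      linear_combination (η + 2) * h2
  rw [e1, e2]

end

end TC

theorem stmt_8 (q : ℕ) (F : Type) [Field F] [Fintype F]
    (hcard : Fintype.card F = q) (K : Type) [Field K] [Fintype K] [Algebra F K] (hcardK : Fintype.card K = q ^ 2) (hq : 5 ≤ q) (hq3 : q % 3 ≠ 0) :
    (∃ ℓ₀ : Submodule F (Fin 4 → F), {ℓ : Submodule F (Fin 4 → F) | isImagAxis F K q ℓ} = lineOrbit F ℓ₀) ∧
    (∀ ℓ : Submodule F (Fin 4 → F), isImagAxis F K q ℓ → (lineStab F ℓ).ncard = 2 * (q + 1)) ∧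
    (∀ ρ : F, Odd q → (¬ ∃ s : F, s ^ 2 = ρ) →
      isImagAxis F K q (Submodule.span F ({![0, 1, 0, -(3 * ρ)], ![-(3 / ρ), 0, 1, 0]} : Set (Fin 4 → F)))) ∧
    (∀ (h : ℕ) (η : F), q = 2 ^ h → (∑ i ∈ Finset.range h, η ^ 2 ^ i) = 1 →
      isImagAxis F K q (Submodule.span F ({![η, 1, 1, 0], ![η, η + 1, 0, 1]} : Set (Fin 4 → F)))) := by
  subst hcard
  have h3 : (3 : F) ≠ 0 := TC.three_ne hq3
  obtain ⟨t, ht⟩ := TC.exists_im (F := F) hcardK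
  refine ⟨⟨_, TC.orbit hcardK h3 hq ht⟩, ?_, ?_, ?_⟩
  · intro ℓ hℓ
    obtain ⟨s, hs, rfl⟩ := (TC.axis_iff hcardK h3 ℓ).1 hℓ
    exact TC.stab hcardK h3 hq hs
  · intro ρ _ hρ
    exact TC.odd_axis hcardK h3 ρ hρ
  · intro h η hh hη
    exact TC.even_axis hcardK h3 h η hh hη
end

section
/- Let q ≥ 5 be an odd prime power. The UΓ-lines of the twisted cubic C form a single orbit of size q² + q under G_q. Moreover, the stabilizer in G_q of the UΓ-line ℓ through (0:0:0:1) and (0:1:0:0) consists exactly of the projectivities induced by the diagonal matrices diag(1, d, d², d³) with d ∈ F_q^*, hence has order q − 1. -/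
open Matrix Submodule

namespace UG

variable {F : Type} [Field F]

def P (t : F) : Fin 4 → F := ![t ^ 3, t ^ 2, t, 1]
def E0 : Fin 4 → F := ![1, 0, 0, 0]

lemma mem_C (W : Submodule F (Fin 4 → F)) :
    W ∈ twistedCubic F ↔ (∃ t : F, W = span F {P t}) ∨ W = span F {E0} := by
  unfold twistedCubic cubicVecs P E0
  constructor
  · rintro ⟨v, ⟨t, rfl⟩ | rfl, rfl⟩
    · exact Or.inl ⟨t, rfl⟩
    · exact Or.inr rfl
  · rintro (⟨t, rfl⟩ | rfl)
    · exact ⟨_, Or.inl ⟨t, rfl⟩, rfl⟩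
    · exact ⟨_, Or.inr rfl, rfl⟩

lemma P_mem_C (t : F) : span F {P t} ∈ twistedCubic F := (mem_C _).2 (Or.inl ⟨t, rfl⟩)
lemma E0_mem_C : span F {(E0 : Fin 4 → F)} ∈ twistedCubic F := (mem_C _).2 (Or.inr rfl)

lemma span_P_inj {s t : F} (h : span F {P s} = span F {P t}) : s = t := by
  have : P s ∈ span F {P t} := h ▸ mem_span_singleton_self _
  obtain ⟨k, hk⟩ := mem_span_singleton.1 this
  have h3 := congrFun hk 3
  have h2 := congrFun hk 2
  simp [P] at h2 h3
  rw [h3] at h2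
  simpa using h2.symm

lemma span_P_ne (t : F) : span F {P t} ≠ span F {(E0 : Fin 4 → F)} := by
  intro h
  have : P t ∈ span F {(E0 : Fin 4 → F)} := h ▸ mem_span_singleton_self _
  obtain ⟨k, hk⟩ := mem_span_singleton.1 this
  have h3 := congrFun hk 3
  simp [P, E0] at h3

lemma act_span (A : GL (Fin 4) F) (v : Fin 4 → F) :
    projAct F A (span F {v}) = span F {v ᵥ* (A : Matrix (Fin 4) (Fin 4) F)} := by
  simp [projAct, Submodule.map_span, Matrix.vecMulLinear]

lemma act_span2 (A : GL (Fin 4) F) (v w : Fin 4 → F) :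
    projAct F A (span F {v, w}) = span F {v ᵥ* (A : Matrix (Fin 4) (Fin 4) F),
      w ᵥ* (A : Matrix (Fin 4) (Fin 4) F)} := by
  simp [projAct, Submodule.map_span, Matrix.vecMulLinear, Set.image_pair]

lemma act_mul (A B : GL (Fin 4) F) (W) : projAct F (A * B) W = projAct F B (projAct F A W) := by
  simp only [projAct, ← Submodule.map_comp]
  congr 1
  refine LinearMap.ext fun v => ?_
  simp [Matrix.vecMul_vecMul]

lemma act_one (W) : projAct F (1 : GL (Fin 4) F) W = W := by
  have : Matrix.vecMulLinear ((1 : GL (Fin 4) F) : Matrix (Fin 4) (Fin 4) F) = LinearMap.id := by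
    refine LinearMap.ext fun v => ?_
    simp
  simp only [projAct, this, Submodule.map_id]

lemma act_inv_act (A : GL (Fin 4) F) (W) : projAct F A⁻¹ (projAct F A W) = W := by
  rw [← act_mul, mul_inv_cancel, act_one]
lemma act_act_inv (A : GL (Fin 4) F) (W) : projAct F A (projAct F A⁻¹ W) = W := by
  rw [← act_mul, inv_mul_cancel, act_one]

lemma act_inj (A : GL (Fin 4) F) : Function.Injective (projAct F A) :=
  Function.LeftInverse.injective (act_inv_act A)

lemma act_mono (A : GL (Fin 4) F) {V W : Submodule F (Fin 4 → F)} (h : V ≤ W) :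
    projAct F A V ≤ projAct F A W := Submodule.map_mono h

lemma act_le_iff (A : GL (Fin 4) F) {V W : Submodule F (Fin 4 → F)} :
    projAct F A V ≤ projAct F A W ↔ V ≤ W := by
  refine ⟨fun h => ?_, act_mono A⟩
  have := act_mono A⁻¹ h
  rwa [act_inv_act, act_inv_act] at this

lemma vecMul_inj (A : GL (Fin 4) F) : Function.Injective
    (Matrix.vecMulLinear (A : Matrix (Fin 4) (Fin 4) F)) := by
  intro v w h
  simp only [Matrix.vecMulLinear_apply] at h
  have := congrArg (fun x => x ᵥ* ((A⁻¹ : GL (Fin 4) F) : Matrix (Fin 4) (Fin 4) F)) h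
  simpa only [Matrix.vecMul_vecMul, ← Units.val_mul, mul_inv_cancel, Units.val_one,
    Matrix.vecMul_one] using this

lemma vecMul_surj (A : GL (Fin 4) F) : Function.Surjective
    (Matrix.vecMulLinear (A : Matrix (Fin 4) (Fin 4) F)) := by
  intro v
  refine ⟨v ᵥ* ((A⁻¹ : GL (Fin 4) F) : Matrix (Fin 4) (Fin 4) F), ?_⟩
  simp only [Matrix.vecMulLinear_apply, Matrix.vecMul_vecMul, ← Units.val_mul, inv_mul_cancel,
    Units.val_one, Matrix.vecMul_one]

lemma act_finrank (A : GL (Fin 4) F) (W) :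
    Module.finrank F (projAct F A W) = Module.finrank F W := by
  exact LinearEquiv.finrank_eq (Submodule.equivMapOfInjective _ (vecMul_inj A) W).symm

lemma act_smul (A B : GL (Fin 4) F) (k : F) (hk : k ≠ 0)
    (h : (A : Matrix (Fin 4) (Fin 4) F) = k • (B : Matrix (Fin 4) (Fin 4) F)) :
    projAct F A = projAct F B := by
  funext W
  have : Matrix.vecMulLinear (A : Matrix (Fin 4) (Fin 4) F) =
      k • Matrix.vecMulLinear (B : Matrix (Fin 4) (Fin 4) F) := by
    refine LinearMap.ext fun v => ?_
    simp [h, Matrix.vecMul_smul]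
  simp only [projAct, this]
  exact Submodule.map_smul _ _ _ hk

/-- translation -/
def T (b : F) : GL (Fin 4) F :=
  ⟨!![1,0,0,0; 3*b,1,0,0; 3*b^2,2*b,1,0; b^3,b^2,b,1],
   !![1,0,0,0; 3*(-b),1,0,0; 3*(-b)^2,2*(-b),1,0; (-b)^3,(-b)^2,-b,1],
   by ext i j; fin_cases i <;> fin_cases j <;> simp [Matrix.mul_apply, Fin.sum_univ_four] <;> ring,
   by ext i j; fin_cases i <;> fin_cases j <;> simp [Matrix.mul_apply, Fin.sum_univ_four] <;> ring⟩

def J : GL (Fin 4) F :=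
  ⟨!![0,0,0,1; 0,0,1,0; 0,1,0,0; 1,0,0,0], !![0,0,0,1; 0,0,1,0; 0,1,0,0; 1,0,0,0],
   by ext i j; fin_cases i <;> fin_cases j <;> simp [Matrix.mul_apply, Fin.sum_univ_four],
   by ext i j; fin_cases i <;> fin_cases j <;> simp [Matrix.mul_apply, Fin.sum_univ_four]⟩

def D (d : F) (hd : d ≠ 0) : GL (Fin 4) F :=
  ⟨!![1, 0, 0, 0; 0, d, 0, 0; 0, 0, d ^ 2, 0; 0, 0, 0, d ^ 3],
   !![1, 0, 0, 0; 0, d⁻¹, 0, 0; 0, 0, d⁻¹ ^ 2, 0; 0, 0, 0, d⁻¹ ^ 3],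
   by ext i j; fin_cases i <;> fin_cases j <;>
        simp [Matrix.mul_apply, Fin.sum_univ_four, hd],
   by ext i j; fin_cases i <;> fin_cases j <;>
        simp [Matrix.mul_apply, Fin.sum_univ_four, hd]⟩

lemma T_inv (b : F) : (T b)⁻¹ = T (-b) := by
  ext i j : 2
  rfl

lemma J_inv : (J : GL (Fin 4) F)⁻¹ = J := by
  ext i j : 2
  rfl

lemma D_inv (d : F) (hd : d ≠ 0) : (D d hd)⁻¹ = D d⁻¹ (inv_ne_zero hd) := by
  ext i j : 2
  rfl

lemma vT (b : F) (v : Fin 4 → F) : v ᵥ* ((T b : GL (Fin 4) F) : Matrix (Fin 4) (Fin 4) F) =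
    ![v 0 + 3*b*v 1 + 3*b^2*v 2 + b^3*v 3, v 1 + 2*b*v 2+b^2*v 3, v 2 + b*v 3, v 3] := by
  ext i
  fin_cases i <;> simp [T, Matrix.vecMul, dotProduct, Fin.sum_univ_four] <;> ring

lemma vJ (v : Fin 4 → F) : v ᵥ* ((J : GL (Fin 4) F) : Matrix (Fin 4) (Fin 4) F) =
    ![v 3, v 2, v 1, v 0] := by
  ext i
  fin_cases i <;> simp [J, Matrix.vecMul, dotProduct, Fin.sum_univ_four]

lemma vD (d : F) (hd : d ≠ 0) (v : Fin 4 → F) :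
    v ᵥ* ((D d hd : GL (Fin 4) F) : Matrix (Fin 4) (Fin 4) F) =
    ![v 0, d * v 1, d^2 * v 2, d^3 * v 3] := by
  ext i
  fin_cases i <;> simp [D, Matrix.vecMul, dotProduct, Fin.sum_univ_four] <;> ring

lemma span_of_smul {v w : Fin 4 → F} (k : F) (hk : k ≠ 0) (h : v = k • w) :
    span F {v} = span F {w} := by
  rw [h]
  exact Submodule.span_singleton_smul_eq hk.isUnit w

lemma T_P (b t : F) : projAct F (T b) (span F {P t}) = span F {P (t + b)} := by
  rw [act_span, vT]
  congr 2
  ext i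
  fin_cases i <;> simp [P] <;> ring

lemma T_E0 (b : F) : projAct F (T b) (span F {E0}) = span F {E0} := by
  rw [act_span, vT]
  congr 2
  ext i
  fin_cases i <;> simp [E0]

lemma J_P (t : F) (ht : t ≠ 0) : projAct F J (span F {P t}) = span F {P t⁻¹} := by
  rw [act_span, vJ]
  refine span_of_smul (t^3) (pow_ne_zero _ ht) ?_
  ext i
  fin_cases i <;> simp [P] <;> field_simp

lemma J_P0 : projAct F J (span F {P 0}) = span F {E0} := by
  rw [act_span, vJ]
  congr 2
  ext i
  fin_cases i <;> simp [P, E0]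

lemma J_E0 : projAct F J (span F {E0}) = span F {P 0} := by
  have := act_inv_act (J : GL (Fin 4) F) (span F {P 0})
  rwa [J_inv, J_P0] at this

lemma D_P (d : F) (hd : d ≠ 0) (t : F) :
    projAct F (D d hd) (span F {P t}) = span F {P (t / d)} := by
  rw [act_span, vD]
  refine span_of_smul (d^3) (pow_ne_zero _ hd) ?_
  ext i
  fin_cases i <;> simp [P] <;> field_simp

lemma D_E0 (d : F) (hd : d ≠ 0) : projAct F (D d hd) (span F {E0}) = span F {E0} := by
  rw [act_span, vD]
  congr 2
  ext i
  fin_cases i <;> simp [E0]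

structure Pres (A : GL (Fin 4) F) : Prop where
  c : ∀ W, W ∈ twistedCubic F → projAct F A W ∈ twistedCubic F
  t : ∀ W, isTangent F W → isTangent F (projAct F A W)
  o : ∀ W, isOscPlane F W → isOscPlane F (projAct F A W)

lemma act_plane (A : GL (Fin 4) F) (c c' : Fin 4 → F) (k : F) (hk : k ≠ 0)
    (h : ∀ y, planeForm F c' (y ᵥ* (A : Matrix (Fin 4) (Fin 4) F)) = k * planeForm F c y) :
    projAct F A (planeOf F c) = planeOf F c' := by
  have : planeOf F c = (planeOf F c').comap
      (Matrix.vecMulLinear (A : Matrix (Fin 4) (Fin 4) F)) := by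
    ext y
    simp only [planeOf, Submodule.mem_comap, LinearMap.mem_ker, Matrix.vecMulLinear_apply, h,
      mul_eq_zero, hk, false_or]
  rw [projAct, this]
  exact Submodule.map_comap_eq_of_surjective (vecMul_surj A) _

lemma span2_eq {v w v' w' : Fin 4 → F} (a b c d : F) (h : a * d - b * c ≠ 0)
    (hv : v = a • v' + b • w') (hw : w = c • v' + d • w') :
    span F {v, w} = span F {v', w'} := by
  apply le_antisymm
  · rw [span_le]
    rintro x (rfl | rfl)
    · exact mem_span_pair.2 ⟨a, b, hv.symm⟩
    · exact mem_span_pair.2 ⟨c, d, hw.symm⟩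
  · rw [span_le]
    rintro x (rfl | rfl)
    · refine mem_span_pair.2 ⟨d / (a*d-b*c), -b/(a*d-b*c), ?_⟩
      subst hv hw
      ext i
      simp only [Pi.add_apply, Pi.smul_apply, smul_eq_mul]
      rw [div_mul_eq_mul_div, div_mul_eq_mul_div, ← add_div, div_eq_iff h]
      ring
    · refine mem_span_pair.2 ⟨-c / (a*d-b*c), a/(a*d-b*c), ?_⟩
      subst hv hw
      ext i
      simp only [Pi.add_apply, Pi.smul_apply, smul_eq_mul]
      rw [div_mul_eq_mul_div, div_mul_eq_mul_div, ← add_div, div_eq_iff h]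
      ring

lemma pres_T (b : F) : Pres (T b) where
  c W h := by
    rcases (mem_C _).1 h with ⟨t, rfl⟩ | rfl
    · rw [T_P]; exact P_mem_C _
    · rw [T_E0]; exact E0_mem_C
  t W h := by
    rcases h with ⟨t, rfl⟩ | rfl
    · refine Or.inl ⟨t + b, ?_⟩
      rw [tangentAt, act_span2, vT, vT, tangentAt]
      congr 2
      · ext i; fin_cases i <;> simp <;> ring
      · congr 1
        ext i; fin_cases i <;> simp <;> ring
    · refine Or.inr ?_
      rw [tangentAtInf, act_span2, vT, vT]
      refine span2_eq 1 0 (3*b) 1 (by simp) ?_ ?_ <;>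
        ext i <;> fin_cases i <;> simp
  o W h := by
    rcases h with ⟨t, rfl⟩ | rfl
    · refine Or.inl ⟨t + b, ?_⟩
      refine act_plane _ _ _ 1 one_ne_zero fun y => ?_
      rw [vT]
      simp [planeForm]
      ring
    · refine Or.inr ?_
      refine act_plane _ _ _ 1 one_ne_zero fun y => ?_
      rw [vT]
      simp [planeForm]

lemma pres_J : Pres (J : GL (Fin 4) F) where
  c W h := by
    rcases (mem_C _).1 h with ⟨t, rfl⟩ | rfl
    · by_cases ht : t = 0
      · subst ht; rw [J_P0]; exact E0_mem_C
      · rw [J_P _ ht]; exact P_mem_C _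
    · rw [J_E0]; exact P_mem_C _
  t W h := by
    rcases h with ⟨t, rfl⟩ | rfl
    · by_cases ht : t = 0
      · subst ht
        refine Or.inr ?_
        rw [tangentAt, act_span2, vJ, vJ, tangentAtInf]
        simp
      · refine Or.inl ⟨t⁻¹, ?_⟩
        rw [tangentAt, act_span2, vJ, vJ, tangentAt]
        refine span2_eq (t^3) 0 (3*t^2) (-t) (by simp [ht]) ?_ ?_ <;>
          ext i <;> fin_cases i <;> simp <;> field_simp <;> ring
    · refine Or.inl ⟨0, ?_⟩
      rw [tangentAtInf, act_span2, vJ, vJ, tangentAt]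
      simp
  o W h := by
    rcases h with ⟨t, rfl⟩ | rfl
    · by_cases ht : t = 0
      · subst ht
        refine Or.inr ?_
        refine act_plane _ _ _ 1 one_ne_zero fun y => ?_
        rw [vJ]
        simp [planeForm]
      · refine Or.inl ⟨t⁻¹, ?_⟩
        refine act_plane _ _ _ (-t⁻¹^3) (by simp [ht]) fun y => ?_
        rw [vJ]
        simp [planeForm]
        field_simp
        ring
    · refine Or.inl ⟨0, ?_⟩
      refine act_plane _ _ _ 1 one_ne_zero fun y => ?_
      rw [vJ]
      simp [planeForm]

lemma pres_D (d : F) (hd : d ≠ 0) : Pres (D d hd) where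
  c W h := by
    rcases (mem_C _).1 h with ⟨t, rfl⟩ | rfl
    · rw [D_P]; exact P_mem_C _
    · rw [D_E0]; exact E0_mem_C
  t W h := by
    rcases h with ⟨t, rfl⟩ | rfl
    · refine Or.inl ⟨t / d, ?_⟩
      rw [tangentAt, act_span2, vD, vD, tangentAt]
      refine span2_eq (d^3) 0 0 (d^2) (by simp [hd]) ?_ ?_ <;>
          ext i <;> fin_cases i <;> simp <;> field_simp
    · refine Or.inr ?_
      rw [tangentAtInf, act_span2, vD, vD]
      refine span2_eq 1 0 0 d (by simp [hd]) ?_ ?_ <;>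
        ext i <;> fin_cases i <;> simp
  o W h := by
    rcases h with ⟨t, rfl⟩ | rfl
    · refine Or.inl ⟨t / d, ?_⟩
      refine act_plane _ _ _ 1 one_ne_zero fun y => ?_
      rw [vD]
      simp [planeForm]
      field_simp
    · refine Or.inr ?_
      refine act_plane _ _ _ (d^3) (pow_ne_zero _ hd) fun y => ?_
      rw [vD]
      simp [planeForm]

def Good (A : GL (Fin 4) F) : Prop := Pres A ∧ Pres A⁻¹

lemma Pres.mul {A B : GL (Fin 4) F} (hA : Pres A) (hB : Pres B) : Pres (A * B) where
  c W h := by rw [act_mul]; exact hB.c _ (hA.c _ h)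
  t W h := by rw [act_mul]; exact hB.t _ (hA.t _ h)
  o W h := by rw [act_mul]; exact hB.o _ (hA.o _ h)

lemma Good.mul {A B : GL (Fin 4) F} (hA : Good A) (hB : Good B) : Good (A * B) :=
  ⟨hA.1.mul hB.1, by rw [_root_.mul_inv_rev]; exact hB.2.mul hA.2⟩

lemma Good.inv {A : GL (Fin 4) F} (hA : Good A) : Good A⁻¹ :=
  ⟨hA.2, by rw [inv_inv]; exact hA.1⟩

lemma good_T (b : F) : Good (T b) := ⟨pres_T b, by rw [T_inv]; exact pres_T _⟩
lemma good_J : Good (J : GL (Fin 4) F) := ⟨pres_J, by rw [J_inv]; exact pres_J⟩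
lemma good_D (d : F) (hd : d ≠ 0) : Good (D d hd) :=
  ⟨pres_D d hd, by rw [D_inv]; exact pres_D _ _⟩

lemma Good.image {A : GL (Fin 4) F} (hA : Good A) :
    projAct F A '' twistedCubic F = twistedCubic F := by
  apply Set.Subset.antisymm
  · rintro _ ⟨W, hW, rfl⟩
    exact hA.1.c _ hW
  · intro W hW
    exact ⟨_, hA.2.c _ hW, act_act_inv _ _⟩

lemma Good.mem_Gq {A : GL (Fin 4) F} (hA : Good A) : projAct F A ∈ Gq F :=
  ⟨⟨A, rfl⟩, hA.image⟩

lemma Good.ugamma {A : GL (Fin 4) F} (hA : Good A) {W} (h : isUGamma F W) :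
    isUGamma F (projAct F A W) := by
  obtain ⟨⟨h1, Q, ⟨hQ, hQW⟩, hu⟩, h2, π, h3, h4⟩ := h
  refine ⟨⟨?_, projAct F A Q, ⟨hA.1.c _ hQ, act_mono A hQW⟩, ?_⟩, ?_, projAct F A π,
    hA.1.o _ h3, act_mono A h4⟩
  · rw [isLine, act_finrank]; exact h1
  · rintro R ⟨hR, hRW⟩
    have := hu (projAct F A⁻¹ R) ⟨hA.2.c _ hR, by
      rw [← act_le_iff A, act_act_inv]; exact hRW⟩
    rw [← this, act_act_inv]
  · intro h
    apply h2
    have := hA.2.t _ h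
    rwa [act_inv_act] at this

/-- mover -/
lemma exists_mover {W : Submodule F (Fin 4 → F)} (h : W ∈ twistedCubic F) :
    ∃ g : GL (Fin 4) F, Good g ∧ projAct F g W = span F {P 0} := by
  rcases (mem_C _).1 h with ⟨t, rfl⟩ | rfl
  · exact ⟨T (-t), good_T _, by rw [T_P]; simp⟩
  · exact ⟨J, good_J, J_E0⟩

/-- t -> t/(1+ct) -/
def K (c : F) : GL (Fin 4) F := J * T c * J

lemma good_K (c : F) : Good (K c) := (good_J.mul (good_T c)).mul good_J

lemma K_P0 (c : F) : projAct F (K c) (span F {P 0}) = span F {P 0} := by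
  rw [K, act_mul, act_mul, J_P0, T_E0, J_E0]

lemma K_P (t : F) (ht : t ≠ 0) : projAct F (K (-t⁻¹)) (span F {P t}) = span F {E0} := by
  rw [K, act_mul, act_mul, J_P _ ht, T_P, add_neg_cancel, J_P0]

lemma K_inv (c : F) : (K c)⁻¹ = K (-c) := by
  rw [K, _root_.mul_inv_rev, _root_.mul_inv_rev, J_inv, T_inv, K, mul_assoc]

lemma K_zero : K (0 : F) = 1 := by
  have : T (0 : F) = 1 := by
    ext i j
    fin_cases i <;> fin_cases j <;> simp [T]
  rw [K, this, mul_one]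
  conv_lhs => rw [← J_inv]
  rw [J_inv, ← mul_inv_cancel J, J_inv]

/-- The lines -/
def M (a : F) : Submodule F (Fin 4 → F) := span F {![0,0,0,1], ![0,1,a,0]}

lemma D_M0 (d : F) (hd : d ≠ 0) : projAct F (D d hd) (M 0) = M 0 := by
  rw [M, act_span2, vD, vD]
  refine span2_eq (d^3) 0 0 d (by simp [hd]) ?_ ?_ <;>
        ext i <;> fin_cases i <;> simp

lemma K_M0 (c : F) : projAct F (K c) (M 0) = M (2*c) := by
  rw [K, act_mul, act_mul, M, act_span2, act_span2, act_span2]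
  simp only [vJ, vT]
  refine span2_eq 1 0 (3*c^2) 1 (by simp) ?_ ?_ <;>
        ext i <;> fin_cases i <;> simp

lemma mem_M (a : F) (v) : v ∈ M a ↔ v 0 = 0 ∧ v 2 = a * v 1 := by
  rw [M, mem_span_pair]
  constructor
  · rintro ⟨x, y, rfl⟩
    simp [mul_comm]
  · rintro ⟨h0, h2⟩
    refine ⟨v 3, v 1, ?_⟩
    ext i
    fin_cases i <;> simp [h0, h2, mul_comm]

lemma M_inj {a b : F} (h : M a = M b) : a = b := by
  have : (![0,1,a,0] : Fin 4 → F) ∈ M b := by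
    rw [← h, mem_M]; simp
  rw [mem_M] at this
  simpa using this

lemma le_M {W} (h : W ∈ twistedCubic F) (a : F) : W ≤ M a ↔ W = span F {P 0} := by
  rcases (mem_C _).1 h with ⟨t, rfl⟩ | rfl
  · rw [span_singleton_le_iff_mem, mem_M]
    constructor
    · rintro ⟨h, -⟩
      have : t = 0 := by simpa [P] using h
      rw [this]
    · intro h
      have := span_P_inj h
      subst this
      simp [P]
  · rw [span_singleton_le_iff_mem, mem_M]
    constructor
    · rintro ⟨h, -⟩
      simp [E0] at h
    · intro h
      exact absurd h.symm (span_P_ne _)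

lemma finrank_M (a : F) : Module.finrank F (M a) = 2 := by
  rw [M]
  have : LinearIndependent F ![(![0,0,0,1] : Fin 4 → F), ![0,1,a,0]] := by
    rw [LinearIndependent.pair_iff]
    intro s t h
    have h1 := congrFun h 1
    have h3 := congrFun h 3
    simp at h1 h3
    exact ⟨h3, h1⟩
  have := finrank_span_eq_card this
  have e : Set.range ![(![0,0,0,1] : Fin 4 → F), ![0,1,a,0]] = {![0,0,0,1], ![0,1,a,0]} := by
    rw [Matrix.range_cons, Matrix.range_cons, Matrix.range_empty, Set.union_empty,
      Set.singleton_union]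
  rw [e, Fintype.card_fin] at this
  exact this

lemma finrank_pair_le (v w : Fin 4 → F) : Module.finrank F (span F {v, w}) ≤ 2 := by
  classical
  have := finrank_span_finset_le_card (R := F) ({v, w} : Finset (Fin 4 → F))
  rw [Finset.coe_pair] at this
  exact this.trans Finset.card_le_two

lemma ugamma_M (a : F) : isUGamma F (M a) := by
  refine ⟨⟨finrank_M a, span F {P 0}, ⟨P_mem_C _, (le_M (P_mem_C _) a).2 rfl⟩,
    fun W hW => (le_M hW.1 a).1 hW.2⟩, ?_, oscPlane F 0, Or.inl ⟨0, rfl⟩, ?_⟩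
  · rintro (⟨t, h⟩ | h)
    · have h1 : (![t ^ 3, t ^ 2, t, 1] : Fin 4 → F) ∈ M a := by
        rw [h, tangentAt]; exact subset_span (by simp)
      have h2 : (![3 * t ^ 2, 2 * t, 1, 0] : Fin 4 → F) ∈ M a := by
        rw [h, tangentAt]; exact subset_span (by simp)
      rw [mem_M] at h1 h2
      have : t = 0 := by simpa using h1.1
      subst this
      simp at h2
    · have h1 : (![1, 0, 0, 0] : Fin 4 → F) ∈ M a := by
        rw [h, tangentAtInf]; exact subset_span (by simp)
      rw [mem_M] at h1
      simp at h1
  · intro v hv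
    rw [mem_M] at hv
    simp [oscPlane, planeOf, planeForm, hv.1]

/-- classification at P(0) -/
lemma ugamma_P0 {W} (h : isUGamma F W) (h0 : span F {P 0} ≤ W) : ∃ a : F, W = M a := by
  obtain ⟨⟨h1, -⟩, h2, π, h3, h4⟩ := h
  have h5 : P 0 ∈ W := by rwa [span_singleton_le_iff_mem] at h0
  have hx0 : ∀ v ∈ W, v 0 = 0 := by
    rcases h3 with ⟨t, rfl⟩ | rfl
    · have := h4 h5
      have ht : t = 0 := by
        simpa [oscPlane, planeOf, planeForm, P] using this
      subst ht
      intro v hv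
      simpa [oscPlane, planeOf, planeForm] using h4 hv
    · have := h4 h5
      simp [oscPlaneInf, planeOf, planeForm, P] at this
  by_cases hy : ∀ v ∈ W, v 1 = 0
  · exfalso
    apply h2
    refine Or.inl ⟨0, ?_⟩
    apply Submodule.eq_of_le_of_finrank_le
    · intro v hv
      rw [tangentAt, mem_span_pair]
      refine ⟨v 3, v 2, ?_⟩
      ext i
      fin_cases i <;> simp [hx0 v hv, hy v hv]
    · rw [h1, tangentAt]
      exact finrank_pair_le _ _
  · push Not at hy
    obtain ⟨v, hv, hv1⟩ := hy
    refine ⟨v 2 / v 1, (Submodule.eq_of_le_of_finrank_le ?_ ?_).symm⟩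
    · rw [M, span_le]
      rintro x (rfl | rfl)
      · simpa [P] using h5
      · have : (v 1)⁻¹ • (v - v 3 • P 0) ∈ W :=
          W.smul_mem _ (W.sub_mem hv (W.smul_mem _ h5))
        have e : (![0, 1, v 2 / v 1, 0] : Fin 4 → F) = (v 1)⁻¹ • (v - v 3 • P 0) := by
          ext i
          fin_cases i <;> simp [P]
          · exact Or.inr (hx0 v hv)
          · exact (inv_mul_cancel₀ hv1).symm
          · exact div_eq_inv_mul _ _
          · exact Or.inr (sub_self (v 3))
        rw [e]
        exact this
    · rw [h1, finrank_M]

lemma poly4 [Fintype F] (hq : 5 ≤ Fintype.card F) (a b c d e : F)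
    (h : ∀ t, a*t^4+b*t^3+c*t^2+d*t+e = 0) : a = 0 ∧ b = 0 ∧ c = 0 ∧ d = 0 ∧ e = 0 := by
  classical
  let p : Polynomial F := .C a * .X^4 + .C b * .X^3 + .C c * .X^2 + .C d * .X + .C e
  have hp : p = 0 := by
    apply Polynomial.eq_zero_of_natDegree_lt_card_of_eval_eq_zero' p Finset.univ
    · intro t _
      simpa [p] using h t
    · have : p.natDegree ≤ 4 := by
        simp only [p]
        compute_degree
      rw [Finset.card_univ]
      omega
  refine ⟨?_, ?_, ?_, ?_, ?_⟩
  · simpa [p, Polynomial.coeff_X, Polynomial.coeff_C] using congrArg (fun r => r.coeff 4) hp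
  · simpa [p, Polynomial.coeff_X, Polynomial.coeff_C] using congrArg (fun r => r.coeff 3) hp
  · simpa [p, Polynomial.coeff_X, Polynomial.coeff_C] using congrArg (fun r => r.coeff 2) hp
  · simpa [p, Polynomial.coeff_X, Polynomial.coeff_C] using congrArg (fun r => r.coeff 1) hp
  · simpa [p, Polynomial.coeff_X, Polynomial.coeff_C] using congrArg (fun r => r.coeff 0) hp

lemma diag_of_fix [Fintype F] (hq : 5 ≤ Fintype.card F) (A : GL (Fin 4) F)
    (hA : ∀ W ∈ twistedCubic F, projAct F A W ∈ twistedCubic F)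
    (h0 : projAct F A (span F {P 0}) = span F {P 0})
    (hi : projAct F A (span F {E0}) = span F {E0}) :
    ∃ d : F, ∃ hd : d ≠ 0, projAct F A = projAct F (D d hd) := by
  have key : ∀ t : F, ∃ s k : F, k ≠ 0 ∧ (t ≠ 0 → s ≠ 0) ∧
      P t ᵥ* (A : Matrix (Fin 4) (Fin 4) F) = k • P s := by
    intro t
    rcases (mem_C _).1 (hA _ (P_mem_C t)) with ⟨s, hs⟩ | hs
    · have hs' := hs
      rw [act_span] at hs
      have h1 : P t ᵥ* (A : Matrix (Fin 4) (Fin 4) F) ∈ span F {P s} :=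
        hs ▸ mem_span_singleton_self _
      obtain ⟨k, hk⟩ := mem_span_singleton.1 h1
      refine ⟨s, k, ?_, ?_, hk.symm⟩
      · rintro rfl
        rw [← hk, zero_smul] at hs
        have h2 : P s ∈ span F {(0 : Fin 4 → F)} := hs ▸ mem_span_singleton_self _
        obtain ⟨k, hk⟩ := mem_span_singleton.1 h2
        have := congrFun hk 3
        simp [P] at this
      · rintro ht rfl
        rw [← h0] at hs'
        exact ht (span_P_inj (act_inj _ hs'))
    · rw [← hi] at hs
      exact absurd (act_inj _ hs) (span_P_ne _)
  have hE : (E0 : Fin 4 → F) ᵥ* (A : Matrix (Fin 4) (Fin 4) F) ∈ span F {(E0 : Fin 4 → F)} := by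
    rw [act_span] at hi
    exact hi ▸ mem_span_singleton_self _
  have hP : (P 0 : Fin 4 → F) ᵥ* (A : Matrix (Fin 4) (Fin 4) F) ∈ span F {(P 0 : Fin 4 → F)} := by
    rw [act_span] at h0
    exact h0 ▸ mem_span_singleton_self _
  obtain ⟨e, he⟩ := mem_span_singleton.1 hE
  obtain ⟨f, hf⟩ := mem_span_singleton.1 hP
  generalize hN : (A : Matrix (Fin 4) (Fin 4) F) = N at *
  have e1 := congrFun he 1
  have e2 := congrFun he 2
  have e3 := congrFun he 3
  have f0 := congrFun hf 0
  have f1 := congrFun hf 1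
  have f2 := congrFun hf 2
  simp [E0, P, Matrix.vecMul, dotProduct, Fin.sum_univ_four] at e1 e2 e3 f0 f1 f2
  have hform : ∀ t : F, (N 1 1 * t^2 + N 2 1 * t) * (N 1 3 * t^2 + N 2 3 * t + N 3 3) =
        (N 1 2 * t^2 + N 2 2 * t)^2 ∧
      (N 0 0 * t^3 + N 1 0 * t^2 + N 2 0 * t) * (N 1 3 * t^2 + N 2 3 * t + N 3 3) =
        (N 1 1 * t^2 + N 2 1 * t) * (N 1 2 * t^2 + N 2 2 * t) ∧
      N 1 3 * t^2 + N 2 3 * t + N 3 3 ≠ 0 ∧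
      (t ≠ 0 → N 1 2 * t^2 + N 2 2 * t ≠ 0) := by
    intro t
    obtain ⟨s, k, hk, hs, h⟩ := key t
    have g0 := congrFun h 0
    have g1 := congrFun h 1
    have g2 := congrFun h 2
    have g3 := congrFun h 3
    simp [P, Matrix.vecMul, dotProduct, Fin.sum_univ_four, ← e1, ← e2, ← e3, ← f0, ← f1, ← f2] at g0 g1 g2 g3
    have g0' : N 0 0 * t^3 + N 1 0 * t^2 + N 2 0 * t = k * s^3 := by rw [← g0]; ring
    have g1' : N 1 1 * t^2 + N 2 1 * t = k * s^2 := by rw [← g1]; ring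
    have g2' : N 1 2 * t^2 + N 2 2 * t = k * s := by rw [← g2]; ring
    have g3' : N 1 3 * t^2 + N 2 3 * t + N 3 3 = k := by rw [← g3]; ring
    rw [g0', g1', g2', g3']
    exact ⟨by ring, by ring, hk, fun ht => mul_ne_zero hk (hs ht)⟩
  have h33 : N 3 3 ≠ 0 := by simpa using (hform 0).2.2.1
  obtain ⟨a4, a3, a2, a1, -⟩ := poly4 hq (N 1 1 * N 1 3 - N 1 2 ^2)
    (N 1 1 * N 2 3 + N 2 1 * N 1 3 - 2 * N 1 2 * N 2 2)
    (N 1 1 * N 3 3 + N 2 1 * N 2 3 - N 2 2 ^ 2) (N 2 1 * N 3 3) 0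
    (fun t => by linear_combination (hform t).1)
  have h21 : N 2 1 = 0 := by simpa [h33] using a1
  rw [h21] at a3 a2 hform
  have hsq : ∀ t, N 1 1 * (N 1 3 * t^2 + N 2 3 * t + N 3 3) = (N 1 2 * t + N 2 2)^2 := by
    intro t
    linear_combination t^2 * a4 + t * a3 + a2
  have h12 : N 1 2 = 0 := by
    by_contra hne
    have h := hsq (-N 2 2 / N 1 2)
    have : N 1 2 * (-N 2 2 / N 1 2) + N 2 2 = 0 := by field_simp; ring
    rw [this] at h
    have h11 : N 1 1 = 0 := by simpa [(hform (-N 2 2 / N 1 2)).2.2.1] using h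
    rw [h11] at a4
    apply hne
    simpa using a4
  have h22 : N 2 2 ≠ 0 := by simpa [h12] using (hform 1).2.2.2 one_ne_zero
  rw [h12] at a4 a3
  have h11 : N 1 1 ≠ 0 := by
    intro h
    rw [h] at a2
    apply h22
    simpa using a2
  have h13 : N 1 3 = 0 := by simpa [h11] using a4
  have h23 : N 2 3 = 0 := by simpa [h11] using a3
  obtain ⟨-, b3, b2, b1, -⟩ := poly4 hq 0 (N 0 0 * N 3 3 - N 1 1 * N 2 2) (N 1 0 * N 3 3)
    (N 2 0 * N 3 3) 0 (fun t => by
      have := (hform t).2.1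
      rw [h12, h13, h23] at this
      linear_combination this)
  have h10 : N 1 0 = 0 := by simpa [h33] using b2
  have h20 : N 2 0 = 0 := by simpa [h33] using b1
  have a2' : N 1 1 * N 3 3 = N 2 2 ^ 2 := by linear_combination a2
  have b3' : N 0 0 * N 3 3 = N 1 1 * N 2 2 := by linear_combination b3
  have h00 : N 0 0 ≠ 0 := by
    intro h
    rw [h, zero_mul] at b3'
    exact mul_ne_zero h11 h22 b3'.symm
  have c11 : N 1 1 = N 2 2 ^ 2 / N 3 3 := by field_simp; exact a2'
  have c00 : N 0 0 = N 2 2 ^ 3 / N 3 3 ^ 2 := by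
    field_simp
    linear_combination N 3 3 * b3' + N 2 2 * a2'
  refine ⟨N 3 3 / N 2 2, div_ne_zero h33 h22, act_smul _ _ (N 0 0) h00 ?_⟩
  rw [hN]
  ext i j
  fin_cases i <;> fin_cases j <;>
    simp [D, ← e1, ← e2, ← e3, ← f0, ← f1, ← f2, h10, h20, h21, h12, h13, h23] <;>
    (try rw [c11]) <;> (try rw [c00]) <;> field_simp

lemma fix_P0 [Fintype F] (hq : 5 ≤ Fintype.card F) (A : GL (Fin 4) F)
    (hA : ∀ W ∈ twistedCubic F, projAct F A W ∈ twistedCubic F)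
    (h0 : projAct F A (span F {P 0}) = span F {P 0}) :
    ∃ d : F, ∃ hd : d ≠ 0, ∃ c : F, projAct F A = projAct F (D d hd * K c) := by
  have main : ∃ c : F, projAct F (K c) (projAct F A (span F {E0})) = span F {E0} := by
    rcases (mem_C _).1 (hA _ E0_mem_C) with ⟨s, hs⟩ | hs
    · refine ⟨-s⁻¹, ?_⟩
      rw [hs, K_P]
      rintro rfl
      rw [← h0] at hs
      exact span_P_ne _ (act_inj _ hs).symm
    · refine ⟨0, ?_⟩
      rw [hs, K_zero, act_one]
  obtain ⟨c, hc⟩ := main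
  obtain ⟨d, hd, h⟩ := diag_of_fix hq (A * K c)
    (fun W hW => by rw [act_mul]; exact (good_K c).1.c _ (hA _ hW))
    (by rw [act_mul, h0, K_P0]) (by rw [act_mul, hc])
  refine ⟨d, hd, -c, ?_⟩
  funext W
  rw [act_mul, ← h, act_mul, ← K_inv, act_inv_act]

lemma all_good [Fintype F] (hq : 5 ≤ Fintype.card F) (A : GL (Fin 4) F)
    (hA : ∀ W ∈ twistedCubic F, projAct F A W ∈ twistedCubic F) :
    ∃ B : GL (Fin 4) F, Good B ∧ projAct F A = projAct F B := by
  obtain ⟨g, hg, h⟩ := exists_mover (hA _ (P_mem_C 0))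
  obtain ⟨d, hd, c, h'⟩ := fix_P0 hq (A * g)
    (fun W hW => by rw [act_mul]; exact hg.1.c _ (hA _ hW)) (by rw [act_mul, h])
  refine ⟨D d hd * K c * g⁻¹, ((good_D d hd).mul (good_K c)).mul hg.inv, ?_⟩
  funext W
  rw [act_mul, ← h', act_mul, act_inv_act]

lemma Gq_pres {f} (hf : f ∈ Gq F) : ∀ W ∈ twistedCubic F, f W ∈ twistedCubic F := by
  intro W hW
  rw [← hf.2]
  exact ⟨W, hW, rfl⟩

/-- parametrisation -/
def par : Option F × F → Submodule F (Fin 4 → F)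
  | (none, a) => projAct F J (M a)
  | (some t, a) => projAct F (T t) (M a)

lemma par_ugamma (x : Option F × F) : isUGamma F (par x) := by
  rcases x with ⟨_ | t, a⟩
  · exact good_J.ugamma (ugamma_M a)
  · exact (good_T t).ugamma (ugamma_M a)

lemma exists_par {W : Submodule F (Fin 4 → F)} (h : isUGamma F W) : ∃ x, par x = W := by
  obtain ⟨Q, ⟨hQ, hQW⟩, -⟩ := h.1.2
  rcases (mem_C _).1 hQ with ⟨t, rfl⟩ | rfl
  · have h1 := (good_T (-t)).ugamma h
    have h2 := act_mono (T (-t)) hQW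
    rw [T_P, add_neg_cancel] at h2
    obtain ⟨a, ha⟩ := ugamma_P0 h1 h2
    refine ⟨(some t, a), ?_⟩
    rw [par, ← ha, ← T_inv, act_act_inv]
  · have h1 := good_J.ugamma h
    have h2 := act_mono J hQW
    rw [J_E0] at h2
    obtain ⟨a, ha⟩ := ugamma_P0 h1 h2
    refine ⟨(none, a), ?_⟩
    rw [par, ← ha]
    conv_lhs => rw [← J_inv]
    rw [J_inv, ← act_mul]
    have : (J : GL (Fin 4) F) * J = 1 := by
      rw [← mul_inv_cancel J, J_inv]
    rw [this, act_one]

lemma uniq_ugamma {W Q R : Submodule F (Fin 4 → F)} (h : isUGamma F W)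
    (hQ : Q ∈ twistedCubic F) (hR : R ∈ twistedCubic F) (h1 : Q ≤ W) (h2 : R ≤ W) : Q = R :=
  h.1.2.unique ⟨hQ, h1⟩ ⟨hR, h2⟩

lemma P0_le_M (a : F) : span F {P 0} ≤ M a := (le_M (P_mem_C 0) a).2 rfl

lemma par_inj : Function.Injective (par : Option F × F → _) := by
  have hn : ∀ a : F, span F {(E0 : Fin 4 → F)} ≤ par (none, a) := by
    intro a
    have := act_mono J (P0_le_M a)
    rwa [J_P0] at this
  have hs : ∀ t a : F, span F {P t} ≤ par (some t, a) := by
    intro t a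
    have := act_mono (T t) (P0_le_M a)
    rwa [T_P, zero_add] at this
  rintro ⟨_ | t, a⟩ ⟨_ | s, b⟩ h
  · rw [M_inj (act_inj _ h)]
  · exact absurd (uniq_ugamma (par_ugamma (some s, b)) (P_mem_C s) E0_mem_C (hs s b)
      (h ▸ hn a)) (span_P_ne _)
  · exact absurd (uniq_ugamma (par_ugamma (some t, a)) (P_mem_C t) E0_mem_C (hs t a)
      (h ▸ hn b)) (span_P_ne _)
  · have : t = s := span_P_inj (uniq_ugamma (par_ugamma (some t, a)) (P_mem_C t) (P_mem_C s)
      (hs t a) (h ▸ hs s b))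
    subst this
    rw [M_inj (act_inj _ h)]

lemma D_inj {d e : F} (hd : d ≠ 0) (he : e ≠ 0) (h : projAct F (D d hd) = projAct F (D e he)) :
    d = e := by
  have := congrFun h (span F {P 1})
  rw [D_P, D_P] at this
  have := span_P_inj this
  field_simp at this
  exact this.symm

lemma two_ne [Fintype F] (hodd : Odd (Fintype.card F)) : (2 : F) ≠ 0 := by
  apply Ring.two_ne_zero
  intro h
  have := FiniteField.even_card_of_char_two h
  rw [← Nat.not_even_iff_odd, Nat.even_iff] at hodd
  exact hodd this

lemma stab_eq [Fintype F] (hq : 5 ≤ Fintype.card F) (hodd : Odd (Fintype.card F)) :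
    lineStab F (M 0) = Set.range (fun d : {d : F // d ≠ 0} => projAct F (D d.1 d.2)) := by
  apply Set.Subset.antisymm
  · rintro f ⟨hf, hM⟩
    have hp := Gq_pres hf
    obtain ⟨⟨A, rfl⟩, -⟩ := hf
    have h0 : projAct F A (span F {P 0}) = span F {P 0} := by
      rw [← le_M (hp _ (P_mem_C 0)) 0, ← hM]
      exact act_mono A (P0_le_M 0)
    obtain ⟨d, hd, c, h⟩ := fix_P0 hq A hp h0
    rw [h, act_mul, D_M0, K_M0] at hM
    have hc : c = 0 := by simpa [two_ne hodd] using M_inj hM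
    subst hc
    refine ⟨⟨d, hd⟩, ?_⟩
    rw [h, K_zero, mul_one]
  · rintro _ ⟨⟨d, hd⟩, rfl⟩
    exact ⟨(good_D d hd).mem_Gq, D_M0 d hd⟩

lemma orbit_eq [Fintype F] (hq : 5 ≤ Fintype.card F) (hodd : Odd (Fintype.card F)) :
    {ℓ : Submodule F (Fin 4 → F) | isUGamma F ℓ} = lineOrbit F (M 0) := by
  have h2 := two_ne hodd
  apply Set.Subset.antisymm
  · intro W hW
    obtain ⟨⟨o, a⟩, rfl⟩ := exists_par hW
    have ha : projAct F (K (a / 2)) (M 0) = M a := by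
      rw [K_M0]; congr 1; field_simp
    rcases o with _ | t
    · exact ⟨_, ((good_K (a/2)).mul good_J).mem_Gq, by rw [act_mul, ha]; rfl⟩
    · exact ⟨_, ((good_K (a/2)).mul (good_T t)).mem_Gq, by rw [act_mul, ha]; rfl⟩
  · rintro W ⟨f, hf, rfl⟩
    have hp := Gq_pres hf
    obtain ⟨⟨A, rfl⟩, -⟩ := hf
    obtain ⟨B, hB, h⟩ := all_good hq A hp
    rw [h]
    exact hB.ugamma (ugamma_M 0)

lemma ncard_ug [Fintype F] :
    {ℓ : Submodule F (Fin 4 → F) | isUGamma F ℓ}.ncard =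
      Fintype.card F ^ 2 + Fintype.card F := by
  have : {ℓ : Submodule F (Fin 4 → F) | isUGamma F ℓ} = Set.range par := by
    ext W
    exact ⟨fun h => exists_par h, by rintro ⟨x, rfl⟩; exact par_ugamma x⟩
  rw [this, ← Set.image_univ, Set.ncard_image_of_injective _ par_inj, Set.ncard_univ,
    Nat.card_eq_fintype_card, Fintype.card_prod, Fintype.card_option]
  ring

lemma ncard_stab [Fintype F] :
    (Set.range (fun d : {d : F // d ≠ 0} => projAct F (D d.1 d.2))).ncard =
      Fintype.card F - 1 := by
  classical
  rw [← Set.image_univ, Set.ncard_image_of_injective _ ?_, Set.ncard_univ,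
    Nat.card_eq_fintype_card, Fintype.card_subtype_compl, Fintype.card_subtype_eq]
  rintro ⟨d, hd⟩ ⟨e, he⟩ h
  exact Subtype.ext (D_inj hd he h)

end UG

theorem stmt_10 (q : ℕ) (F : Type) [Field F] [Fintype F]
    (hcard : Fintype.card F = q) (hq : 5 ≤ q) (hodd : Odd q) :
    isUGamma F (Submodule.span F ({![0, 0, 0, 1], ![0, 1, 0, 0]} : Set (Fin 4 → F))) ∧
    {ℓ : Submodule F (Fin 4 → F) | isUGamma F ℓ} = lineOrbit F (Submodule.span F ({![0, 0, 0, 1], ![0, 1, 0, 0]} : Set (Fin 4 → F))) ∧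
    {ℓ : Submodule F (Fin 4 → F) | isUGamma F ℓ}.ncard = q ^ 2 + q ∧
    lineStab F (Submodule.span F ({![0, 0, 0, 1], ![0, 1, 0, 0]} : Set (Fin 4 → F))) =
      {f | ∃ d : F, d ≠ 0 ∧ ∃ A : GL (Fin 4) F,
        (↑A : Matrix (Fin 4) (Fin 4) F) =
          !![1, 0, 0, 0; 0, d, 0, 0; 0, 0, d ^ 2, 0; 0, 0, 0, d ^ 3] ∧
        f = projAct F A} ∧
    (lineStab F (Submodule.span F ({![0, 0, 0, 1], ![0, 1, 0, 0]} : Set (Fin 4 → F)))).ncard = q - 1 := by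
  subst hcard
  have hM : (Submodule.span F ({![0, 0, 0, 1], ![0, 1, 0, 0]} : Set (Fin 4 → F))) = UG.M 0 := rfl
  rw [hM]
  refine ⟨UG.ugamma_M 0, UG.orbit_eq hq hodd, UG.ncard_ug, ?_, ?_⟩
  · rw [UG.stab_eq hq hodd]
    ext f
    constructor
    · rintro ⟨⟨d, hd⟩, rfl⟩
      exact ⟨d, hd, UG.D d hd, rfl, rfl⟩
    · rintro ⟨d, hd, A, hA, rfl⟩
      refine ⟨⟨d, hd⟩, ?_⟩
      have : A = UG.D d hd := Units.ext hA
      rw [this]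
  · rw [UG.stab_eq hq hodd, UG.ncard_stab]
end
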